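/- For the complete bipartite graphs K_{2,k} (k ≥ 2): the graph 3-braid group B₃(K_{2,2}) is isomorphic to ℤ, B₃(K_{2,3}) is isomorphic to the free group of rank 3, and for every k ≥ 4 the group B₃(K_{2,k}) is not isomorphic to any free group. Consequently, B₃(K_{2,k}) is free if and only if k ≤ 3. -/

import Mathlib

/-!
Write `Theta k` for the realization of `K_{2,k}`: two poles joined by `k` edges. Sort the points of a
configuration from bottom to top. Points on different open edges may be sorted either way, so a
configuration can have several admissible orderings; these form a space `OConf k` with a map `toU`
to the unordered configuration space, which is a surjective local homeomorphism. Sliding the lower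
point to the bottom pole and the upper one to the top pole contracts each component of `OConf k`,
and the components are indexed by the edge `mid` of the middle point, which is never at a pole.

So the fundamental group is governed by changes of sheet. Cutting paths into pieces that lift to
`OConf k` (`path_class_induction`), one sees that the group is generated by the loops that change
between two orderings of one configuration, hence by the loops `genP i j` and `genQ i j` exchanging
two adjacent points. They satisfy the relations `BraidRel`: inverses, triviality along a spanning
tree, and one hexagon relation for each triple of edges. Conversely, a solution of `BraidRel` in a
group `G` defines a locally constant `G`-valued cocycle on the sheets, and the monodromy of the
associated covering (`exists_transport`) is a homomorphism to `G` with the given values on the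
generators (`exists_braid_hom`). Together this is a presentation, `isPresented_braid`.

For `k = 2` the presentation collapses to one free generator. For `k = 3` there is one essential
hexagon, which eliminates a generator and leaves the free basis `Q 0 1`, `Q 1 2`, `Q 2 0`. For
`k ≥ 4` there are two homomorphisms to `ℤ` with nonzero cup product: the resulting homomorphism to
`ℤ × ℤ` does not lift to the integral Heisenberg group, whereas from a free group every such
homomorphism lifts.
-/

open scoped Classical

noncomputable section

namespace GraphBraid

/-- The standard basis vector `e_v` in `ℝ^V`. -/
def basisVec {V : Type} [DecidableEq V] (v : V) : V → ℝ := fun w => if w = v then 1 else 0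

/-- The geometric realization of a simple graph, as the subspace of `ℝ^V` given by the
union over the edges of the straight segments joining the corresponding basis vectors. -/
def realization {V : Type} [DecidableEq V] (G : SimpleGraph V) : Set (V → ℝ) :=
  ⋃ (u : V) (v : V) (_ : G.Adj u v), segment ℝ (basisVec u) (basisVec v)

/-- The realization of a subgraph, as a subspace of `ℝ^V`. -/
def subRealization {V : Type} [DecidableEq V] {G : SimpleGraph V} (H : G.Subgraph) :
    Set (V → ℝ) :=
  ⋃ (u : V) (v : V) (_ : H.Adj u v), segment ℝ (basisVec u) (basisVec v)

/-- The ordered `n`-point configuration space of a topological space. -/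
abbrev Conf (n : ℕ) (X : Type) [TopologicalSpace X] : Type :=
  {f : Fin n → X // Function.Injective f}

/-- Two ordered configurations are related when they differ by a permutation of coordinates. -/
def permRel (n : ℕ) (X : Type) [TopologicalSpace X] (f g : Conf n X) : Prop :=
  ∃ σ : Equiv.Perm (Fin n), (f : Fin n → X) = (g : Fin n → X) ∘ σ

/-- The unordered `n`-point configuration space: the quotient of the ordered configuration
space by the symmetric group permuting coordinates. -/
abbrev UConf (n : ℕ) (X : Type) [TopologicalSpace X] : Type :=
  Quot (permRel n X)

/-- A group is free when it is isomorphic to `FreeGroup S` for some set `S`. -/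
def IsFreeGroupType (G : Type*) [Group G] : Prop :=
  ∃ S : Type, Nonempty (G ≃* FreeGroup S)

/-- A cycle subgraph: a subgraph with at least one edge which is connected and all of whose
vertices have degree exactly two (inside the subgraph). -/
def IsCycleSubgraph {W : Type*} {G : SimpleGraph W} (H : G.Subgraph) : Prop :=
  H.edgeSet.Nonempty ∧ H.Connected ∧ ∀ v ∈ H.verts, (H.neighborSet v).ncard = 2

open scoped Topology

/-! ### Transport along a locally constant cocycle -/

section Transport

variable {X Y G : Type} [TopologicalSpace X] [TopologicalSpace Y] [Group G]

/-- A `G`-valued cocycle on the fibre product of a map `ρ : Y → X` with itself, locally constant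
there. It is encoded as a function on all of `Y × Y`, whose values off the fibre product are
irrelevant. -/
structure LocConstCocycle (ρ : Y → X) (G : Type) [Group G] where
  /-- the value of the cocycle -/
  c : Y → Y → G
  comp : ∀ y y' y'', ρ y = ρ y' → ρ y' = ρ y'' → c y' y'' * c y y' = c y y''
  locConst : ∀ y y', ρ y = ρ y' → ∀ᶠ z in 𝓝 (y, y'), ρ z.1 = ρ z.2 → c z.1 z.2 = c y y'

variable {ρ : Y → X} (hρ : IsLocalHomeomorph ρ) (c : LocConstCocycle ρ G)
  (s : X → Y) (hs : ∀ x, ρ (s x) = x)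

lemma mem_src {ρ : Y → X} (hρ : IsLocalHomeomorph ρ) (s : X → Y) (hs : ∀ x, ρ (s x) = x)
    (x : X) : x ∈ (hρ.localInverseAt (s x)).source := by
  have := hρ.apply_self_mem_localInverseAt_source (x := s x)
  rwa [hs] at this

lemma LocConstCocycle.self {X Y G : Type} [TopologicalSpace Y] [Group G] {ρ : Y → X}
    (c : LocConstCocycle ρ G) (y : Y) : c.c y y = 1 := by
  have := c.comp y y y rfl rfl
  simpa using this

variable [TopologicalSpace G] [DiscreteTopology G]

/-- The principal `G`-bundle with discrete fibre over `X` glued from the cocycle `c`. It is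
trivialized over the domain of the local inverse of `ρ` at each `y : Y`; the section `s`, not assumed
continuous, selects the trivialization used to name the points of the fibre over `x`. -/
def bundle : FiberBundleCore Y X G where
  baseSet y := (hρ.localInverseAt y).source
  isOpen_baseSet y := (hρ.localInverseAt y).open_source
  indexAt := s
  mem_baseSet_at := mem_src hρ s hs
  coordChange i j x v := c.c (hρ.localInverseAt i x) (hρ.localInverseAt j x) * v
  coordChange_self i x _ v := by rw [c.self, one_mul]
  continuousOn_coordChange i j := by
    rintro ⟨x, v⟩ ⟨⟨hi, hj⟩, -⟩
    have e1 := hρ.apply_localInverseAt_of_mem hi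
    have e2 := hρ.apply_localInverseAt_of_mem hj
    have h := c.locConst _ _ (e1.trans e2.symm)
    have hc : Filter.Tendsto (fun x => (hρ.localInverseAt i x, hρ.localInverseAt j x)) (𝓝 x)
      (𝓝 (hρ.localInverseAt i x, hρ.localInverseAt j x)) :=
      ((hρ.localInverseAt i).continuousAt hi).prodMk ((hρ.localInverseAt j).continuousAt hj)
    have h2 := hc.eventually h
    have h3 := ((hρ.localInverseAt i).open_source.inter (hρ.localInverseAt j).open_source).mem_nhds
      ⟨hi, hj⟩
    apply ContinuousAt.continuousWithinAt
    have : (fun p : X × G => c.c (hρ.localInverseAt i p.1) (hρ.localInverseAt j p.1) * p.2)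
      =ᶠ[𝓝 (x, v)] fun p => c.c (hρ.localInverseAt i x) (hρ.localInverseAt j x) * p.2 := by
      have h4 := (continuous_fst (X := X) (Y := G)).continuousAt (x := (x, v)) |>.eventually
        (h2.and h3)
      filter_upwards [h4] with p hp
      rw [hp.1]
      exact (hρ.apply_localInverseAt_of_mem hp.2.1).trans
        (hρ.apply_localInverseAt_of_mem hp.2.2).symm
    refine ContinuousAt.congr ?_ this.symm
    exact (continuous_of_discreteTopology.comp continuous_snd).continuousAt
  coordChange_comp i j k x hx v := by
    obtain ⟨⟨hi, hj⟩, hk⟩ := hx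
    have e1 := hρ.apply_localInverseAt_of_mem hi
    have e2 := hρ.apply_localInverseAt_of_mem hj
    have e3 := hρ.apply_localInverseAt_of_mem hk
    rw [← mul_assoc, c.comp _ _ _ (e1.trans e2.symm) (e2.trans e3.symm)]

/-- The group coordinate of a point of the bundle, in the trivialization indexed by `s`. -/
def gval (p : (bundle hρ c s hs).TotalSpace) : G := p.2

lemma bundle_triv_apply (y : Y) (p : (bundle hρ c s hs).TotalSpace) :
    (bundle hρ c s hs).localTriv y p =
      (p.1, c.c (s p.1) (hρ.localInverseAt y p.1) * gval hρ c s hs p) := by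
  have h : hρ.localInverseAt (s p.1) p.1 = s p.1 := by
    have := hρ.localInverseAt_apply_self (x := s p.1)
    rwa [hs] at this
  have h2 := (bundle hρ c s hs).localTriv_apply y p
  rw [h2]
  refine Prod.ext rfl ?_
  show c.c (hρ.localInverseAt (s p.1) p.1) (hρ.localInverseAt y p.1) * gval hρ c s hs p = _
  rw [h]

/-- Continuity into the bundle can be tested in the trivialization indexed by any `y`. -/
lemma bundle_continuousAt {Z : Type} [TopologicalSpace Z] (f : Z → (bundle hρ c s hs).TotalSpace)
    (z : Z) (y : Y) (hy : (f z).1 ∈ (hρ.localInverseAt y).source)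
    (h1 : ContinuousAt (fun z => (f z).1) z)
    (h2 : ContinuousAt
      (fun z => c.c (s (f z).1) (hρ.localInverseAt y (f z).1) * gval hρ c s hs (f z)) z) :
    ContinuousAt f z := by
  have hopen : IsOpen ((bundle hρ c s hs).proj ⁻¹' (hρ.localInverseAt y).source) :=
    (hρ.localInverseAt y).open_source.preimage (bundle hρ c s hs).continuous_proj
  have key : ContinuousAt (fun z => (bundle hρ c s hs).localTriv y (f z)) z := by
    simp_rw [bundle_triv_apply]
    exact h1.prodMk h2
  set e := ((bundle hρ c s hs).localTriv y).toOpenPartialHomeomorph with he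
  have hev : ∀ᶠ z' in 𝓝 z, f z' ∈ e.source := by
    filter_upwards [h1.eventually ((hρ.localInverseAt y).open_source.mem_nhds hy)] with z' hz'
    exact ((bundle hρ c s hs).mem_localTriv_source y _).2 hz'
  have hz : f z ∈ e.source := hev.self_of_nhds
  have h4 : ContinuousAt e.symm (e (f z)) := e.symm.continuousAt (e.map_source hz)
  have h5 : ContinuousAt (fun z => e.symm (e (f z))) z :=
    ContinuousAt.comp (f := fun z => e (f z)) h4 key
  refine h5.congr ?_
  filter_upwards [hev] with z' hz'
  exact e.left_inv hz'

/-- Right translation by `g` in the fibres. The transition functions are left translations, so it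
is globally defined, and monodromy commutes with it. -/
def rmul (g : G) : C((bundle hρ c s hs).TotalSpace, (bundle hρ c s hs).TotalSpace) where
  toFun p := ⟨p.1, (gval hρ c s hs p * g : G)⟩
  continuous_toFun := by
    rw [continuous_iff_continuousAt]
    intro p
    refine bundle_continuousAt hρ c s hs _ p (s p.1) (mem_src hρ s hs _) ?_ ?_
    · exact (bundle hρ c s hs).continuous_proj.continuousAt
    · have h1 : ContinuousAt ((bundle hρ c s hs).localTriv (s p.1)) p := by
        refine ((bundle hρ c s hs).localTriv (s p.1)).continuousAt ?_
        exact ((bundle hρ c s hs).mem_localTriv_source _ _).2 (mem_src hρ s hs _)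
      have h2 := continuous_snd.continuousAt.comp h1
      have h3 : ContinuousAt (fun v : G => v * g) (Prod.snd ((bundle hρ c s hs).localTriv (s p.1) p))
        := continuous_of_discreteTopology.continuousAt
      have h4 := ContinuousAt.comp (f := fun q => ((bundle hρ c s hs).localTriv (s p.1) q).2) h3 h2
      refine h4.congr (Filter.Eventually.of_forall fun q => ?_)
      show ((bundle hρ c s hs).localTriv (s p.1) q).2 * g = _
      rw [bundle_triv_apply]
      exact mul_assoc _ _ _

/-- A lift to the bundle of the image in `X` of a path of `Y`: in the trivializations along the
path it is constant, equal to `v`. -/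
def liftCurve {y y' : Y} (η : Path y y') (v : G) :
    C(unitInterval, (bundle hρ c s hs).TotalSpace) where
  toFun t := ⟨ρ (η t), (c.c (η t) (s (ρ (η t))) * v : G)⟩
  continuous_toFun := by
    rw [continuous_iff_continuousAt]
    intro t
    refine bundle_continuousAt hρ c s hs _ t (η t) ?_ ?_ ?_
    · exact hρ.apply_self_mem_localInverseAt_source
    · exact (hρ.continuous.comp η.continuous).continuousAt
    · have hc : ContinuousAt (fun t' => (η t', hρ.localInverseAt (η t) (ρ (η t')))) t := by
        refine η.continuous.continuousAt.prodMk ?_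
        have h1 : ContinuousAt (hρ.localInverseAt (η t)) (ρ (η t)) :=
          (hρ.localInverseAt (η t)).continuousAt (hρ.apply_self_mem_localInverseAt_source)
        exact ContinuousAt.comp (f := fun t' => ρ (η t')) h1
          (hρ.continuous.comp η.continuous).continuousAt
      have h2 := hc.eventually (c.locConst _ _ (by
        rw [hρ.localInverseAt_apply_self]))
      have h3 : ∀ᶠ t' in 𝓝 t, ρ (η t') ∈ (hρ.localInverseAt (η t)).source :=
        (hρ.continuous.comp η.continuous).continuousAt.eventually
          ((hρ.localInverseAt (η t)).open_source.mem_nhds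
            (hρ.apply_self_mem_localInverseAt_source))
      refine ContinuousAt.congr (f := fun _ => c.c (η t) (hρ.localInverseAt (η t) (ρ (η t))) * v)
        continuousAt_const ?_
      filter_upwards [h2, h3] with t' h2 h3
      have e1 := hρ.apply_localInverseAt_of_mem h3
      rw [← h2 e1.symm]
      show _ = c.c (s (ρ (η t'))) (hρ.localInverseAt (η t) (ρ (η t'))) *
        (c.c (η t') (s (ρ (η t'))) * v)
      rw [← mul_assoc, c.comp _ _ _ (hs _).symm (e1.trans (hs _).symm).symm]

lemma bundle_cov : IsCoveringMap (bundle hρ c s hs).proj :=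
  FiberBundle.isCoveringMap (F := G) (E := (bundle hρ c s hs).Fiber)

end Transport

/-- A locally constant cocycle assigns an element of `G` to each path class of `X`, multiplicatively
(up to the reversal of order) and explicitly on the images of paths of `Y`: it is the monodromy of
`bundle`, which is a left translation since it commutes with right translations. -/
theorem exists_transport {X Y G : Type} [TopologicalSpace X] [TopologicalSpace Y] [Group G]
    {ρ : Y → X} (hρ : IsLocalHomeomorph ρ) (c : LocConstCocycle ρ G)
    (s : X → Y) (hs : ∀ x, ρ (s x) = x) :
    ∃ T : ∀ {x x' : X}, Path.Homotopic.Quotient x x' → G,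
      (∀ {x x' x''} (γ : Path.Homotopic.Quotient x x') (δ : Path.Homotopic.Quotient x' x''),
        T (γ.trans δ) = T δ * T γ) ∧
      ∀ {y y' : Y} (η : Path y y'), T (.mk (η.map hρ.continuous)) =
        c.c y' (s (ρ y')) * c.c (s (ρ y)) y := by
  let _ : TopologicalSpace G := ⊥
  have : DiscreteTopology G := ⟨rfl⟩
  set Z := bundle hρ c s hs with hZ
  have cov := bundle_cov hρ c s hs
  let pt : ∀ x : X, G → Z.proj ⁻¹' {x} := fun x v => ⟨⟨x, v⟩, rfl⟩
  have hpt : ∀ x (e : Z.proj ⁻¹' {x}), ∃ v, e = pt x v := by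
    rintro x ⟨⟨x', v⟩, h⟩
    obtain rfl : x' = x := h
    exact ⟨v, rfl⟩
  have hinj : ∀ x v w, pt x v = pt x w → v = w := by
    intro x v w h
    have := congrArg Subtype.val h
    exact congrArg (gval hρ c s hs) this
  choose val hval using hpt
  have key : ∀ {x x' : X} (γ : Path.Homotopic.Quotient x x') (g : G),
      cov.monodromy γ (pt x g) = pt x' (val _ (cov.monodromy γ (pt x 1)) * g) := by
    intro x x' γ g
    set e := cov.monodromy γ (pt x 1) with he
    obtain ⟨w, hw⟩ : ∃ w, w = val _ e := ⟨_, rfl⟩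
    rw [← hw]
    have hew : e = pt x' w := by rw [hw]; exact hval _ _
    have hpg : pt x g = ⟨rmul hρ c s hs g (pt x 1).1, rfl⟩ := by
      apply Subtype.ext
      show (⟨x, g⟩ : Z.TotalSpace) = ⟨x, ((1 : G) * g : G)⟩
      rw [one_mul]
    have hpg2 : pt x' (w * g) = ⟨rmul hρ c s hs g e.1, e.2⟩ := by
      rw [hew]; rfl
    rw [hpg, hpg2]
    refine cov.monodromy_eq_of_map_eq ((cov.liftPathQuotient γ (pt x 1)).map (rmul hρ c s hs g)) ?_
    have h1 := cov.map_liftPathQuotient γ (pt x 1)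
    refine Eq.trans ?_ h1
    generalize cov.liftPathQuotient γ (pt x 1) = Γ
    induction Γ using Path.Homotopic.Quotient.ind with | mk Γ => rfl
  refine ⟨fun {x x'} γ => val _ (cov.monodromy γ (pt x 1)), ?_, ?_⟩
  · intro x x' x'' γ δ
    apply hinj x''
    rw [← key, ← hval, ← hval, cov.monodromy_trans_apply]
  · intro y y' η
    apply hinj (ρ y')
    rw [← hval]
    set v : G := c.c (s (ρ y)) y
    let Γ : Path (pt (ρ y) 1).1 (pt (ρ y') (c.c y' (s (ρ y')) * c.c (s (ρ y)) y)).1 :=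
      { toContinuousMap := liftCurve hρ c s hs η v
        source' := by
          show (⟨ρ (η 0), (c.c (η 0) (s (ρ (η 0))) * v : G)⟩ : Z.TotalSpace) = ⟨ρ y, (1 : G)⟩
          rw [η.source]
          simp only [v]
          rw [c.comp _ _ _ (hs _) (hs _).symm, c.self]
        target' := by
          show (⟨ρ (η 1), (c.c (η 1) (s (ρ (η 1))) * v : G)⟩ : Z.TotalSpace) = _
          rw [η.target] }
    refine cov.monodromy_eq_of_map_eq (.mk Γ) ?_
    rfl

/-! ### Cutting paths into liftable pieces -/

/-- If `ρ : Y → X` is a surjective local homeomorphism, every path class of `X` is a product of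
images of paths of `Y`: subdivide by a Lebesgue number for the domains of the local inverses. -/
theorem path_class_induction {X Y : Type} [TopologicalSpace X] [TopologicalSpace Y]
    {ρ : Y → X} (hρ : IsLocalHomeomorph ρ) (hsurj : Function.Surjective ρ)
    (M : ∀ {x x' : X}, Path.Homotopic.Quotient x x' → Prop)
    (htrans : ∀ {x x' x'' : X} (γ : Path.Homotopic.Quotient x x')
      (δ : Path.Homotopic.Quotient x' x''), M γ → M δ → M (γ.trans δ))
    (hlift : ∀ {y y' : Y} (η : Path y y'), M (.mk (η.map hρ.continuous)))
    {x x' : X} (γ : Path.Homotopic.Quotient x x') : M γ := by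
  have hlift' : ∀ {x x' : X} (γ : Path x x') {y y' : Y} (η : Path y y'),
      (∀ t, ρ (η t) = γ t) → M (.mk γ) := by
    intro x x' γ y y' η h
    obtain rfl : ρ y = x := by simpa using h 0
    obtain rfl : ρ y' = x' := by simpa using h 1
    have : γ = η.map hρ.continuous := by
      ext t; exact (h t).symm
    rw [this]; exact hlift η
  induction γ using Path.Homotopic.Quotient.ind with | mk γ =>
  choose s hs using hsurj
  obtain ⟨t, ht0, htm, ⟨N, hN⟩, hcov⟩ := exists_monotone_Icc_subset_open_cover_unitInterval
    (c := fun y : Y => γ ⁻¹' (hρ.localInverseAt y).source)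
    (fun y => (hρ.localInverseAt y).open_source.preimage γ.continuous)
    (fun u _ => Set.mem_iUnion.2 ⟨s (γ u), by
      have := hρ.apply_self_mem_localInverseAt_source (x := s (γ u))
      rw [hs] at this
      exact this⟩)
  have hstep : ∀ n, M (.mk (γ.subpath (t n) (t (n + 1)))) := by
    intro n
    obtain ⟨y, hy⟩ := hcov n
    have hmem : ∀ u, γ.subpath (t n) (t (n + 1)) u ∈ (hρ.localInverseAt y).source := by
      intro u
      have : γ.subpath (t n) (t (n + 1)) u ∈ Set.range (γ.subpath (t n) (t (n + 1))) := ⟨u, rfl⟩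
      rw [Path.range_subpath_of_le _ _ _ (htm (Nat.le_succ n))] at this
      obtain ⟨v, hv, hv'⟩ := this
      rw [← hv']
      exact hy hv
    let η := (γ.subpath (t n) (t (n + 1))).map' (f := hρ.localInverseAt y)
      ((hρ.localInverseAt y).continuousOn.mono (by rintro _ ⟨u, rfl⟩; exact hmem u))
    refine hlift' _ η fun u => ?_
    exact hρ.apply_localInverseAt_of_mem (hmem u)
  have hall : ∀ n, M (.mk (γ.subpath (t 0) (t n))) := by
    intro n
    induction n with
    | zero =>
      refine hlift' _ (Path.refl (s (γ (t 0)))) fun u => ?_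
      simp [hs]
    | succ n ih =>
      have := htrans _ _ ih (hstep n)
      rw [← Path.Homotopic.Quotient.mk_trans] at this
      rwa [Path.Homotopic.Quotient.eq.2 ⟨Path.Homotopy.subpathTransSubpath γ _ _ _⟩] at this
  have h := hall N
  rw [ht0, hN N le_rfl, Path.subpath_zero_one] at h
  have e0 := γ.source
  have e1 := γ.target
  have : ∀ {a b : X} (ha : a = x) (hb : b = x'), M (.mk (γ.cast ha hb)) → M (.mk γ) := by
    rintro a b rfl rfl h; exact h
  exact this _ _ h

/-! ### The theta graph -/

section Theta

variable {k : ℕ}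

/-- The realization of `K_{2,k}`: two poles, the vertices `inl 0` and `inl 1`, joined by `k` edges.
Here and below an edge means the union of the two segments through one of the `k` vertices
`inr j`. -/
abbrev Theta (k : ℕ) : Type := ↥(realization (completeBipartiteGraph (Fin 2) (Fin k)))

/-- The height, from `-1` at the pole `inl 0` to `1` at the pole `inl 1`. -/
def height (x : Theta k) : ℝ := x.1 (.inl 1) - x.1 (.inl 0)

/-- The open `j`-th edge: poles removed, middle vertex kept. -/
def edgeSet (j : Fin k) : Set (Theta k) := {x | 0 < x.1 (.inr j)}

/-- The coordinates of the point at height `t` on the `j`-th edge. -/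
def ptVec (j : Fin k) (t : ℝ) : Fin 2 ⊕ Fin k → ℝ :=
  Sum.elim ![max (-t) 0, max t 0] (fun i => if i = j then 1 - |t| else 0)

lemma ptVec_mem (j : Fin k) {t : ℝ} (h1 : -1 ≤ t) (h2 : t ≤ 1) :
    ptVec j t ∈ realization (completeBipartiteGraph (Fin 2) (Fin k)) := by
  simp only [realization, Set.mem_iUnion]
  rcases le_total t 0 with h | h
  · refine ⟨.inl 0, .inr j, by simp, -t, 1 + t, by linarith, by linarith, by ring, ?_⟩
    funext v
    rcases v with v | v
    · fin_cases v <;> simp [ptVec, basisVec, h]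
    · simp only [ptVec, basisVec, abs_of_nonpos h, Pi.add_apply, Pi.smul_apply]
      by_cases hv : v = j <;> simp [hv]
  · refine ⟨.inl 1, .inr j, by simp, t, 1 - t, by linarith, by linarith, by ring, ?_⟩
    funext v
    rcases v with v | v
    · fin_cases v <;> simp [ptVec, basisVec, h]
    · simp only [ptVec, basisVec, abs_of_nonneg h, Pi.add_apply, Pi.smul_apply]
      by_cases hv : v = j <;> simp [hv]

lemma exists_ptVec {x : Fin 2 ⊕ Fin k → ℝ}
    (hx : x ∈ realization (completeBipartiteGraph (Fin 2) (Fin k))) :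
    ∃ j t, -1 ≤ t ∧ t ≤ 1 ∧ x = ptVec j t := by
  have key : ∀ (a : Fin 2) (j : Fin k) (s t : ℝ), 0 ≤ s → 0 ≤ t → s + t = 1 →
      ∃ j' t', -1 ≤ t' ∧ t' ≤ 1 ∧
        s • basisVec (Sum.inl a) + t • basisVec (Sum.inr j) = ptVec (k := k) j' t' := by
    intro a j s t hs ht hst
    fin_cases a
    · refine ⟨j, -s, by linarith, by linarith, ?_⟩
      funext v
      rcases v with v | v
      · fin_cases v <;> simp [ptVec, basisVec, hs]
      · simp only [ptVec, basisVec, abs_neg, abs_of_nonneg hs, Pi.add_apply, Pi.smul_apply]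
        by_cases hv : v = j <;> simp [hv]; linarith
    · refine ⟨j, s, by linarith, by linarith, ?_⟩
      funext v
      rcases v with v | v
      · fin_cases v <;> simp [ptVec, basisVec, hs]
      · simp only [ptVec, basisVec, abs_of_nonneg hs, Pi.add_apply, Pi.smul_apply]
        by_cases hv : v = j <;> simp [hv]; linarith
  simp only [realization, Set.mem_iUnion] at hx
  obtain ⟨u, v, huv, s, t, hs, ht, hst, rfl⟩ := hx
  rcases u with u | u <;> rcases v with v | v
  · simp at huv
  · exact key u v s t hs ht hst
  · rw [add_comm]
    exact key v u t s ht hs (by linarith)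
  · simp at huv

/-- The point at height `t` on the `j`-th edge, with `t` clamped to `[-1, 1]`. -/
def pt (j : Fin k) (t : ℝ) : Theta k :=
  ⟨ptVec j (max (-1) (min 1 t)), ptVec_mem j (le_max_left _ _)
    (max_le (by norm_num) (min_le_left _ _))⟩

lemma clamp_eq {t : ℝ} (h1 : -1 ≤ t) (h2 : t ≤ 1) : max (-1) (min 1 t) = t := by
  rw [min_eq_right h2, max_eq_right h1]

lemma pt_val (j : Fin k) {t : ℝ} (h1 : -1 ≤ t) (h2 : t ≤ 1) : (pt j t).1 = ptVec j t := by
  simp only [pt, clamp_eq h1 h2]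

lemma exists_pt (x : Theta k) : ∃ j t, -1 ≤ t ∧ t ≤ 1 ∧ x = pt j t := by
  obtain ⟨j, t, h1, h2, h⟩ := exists_ptVec x.2
  exact ⟨j, t, h1, h2, Subtype.ext (h.trans (pt_val j h1 h2).symm)⟩

@[simp] lemma height_pt (j : Fin k) {t : ℝ} (h1 : -1 ≤ t) (h2 : t ≤ 1) : height (pt j t) = t := by
  simp only [height, pt_val j h1 h2, ptVec, Sum.elim_inl]
  rcases le_total t 0 with h | h <;> simp [h]

lemma pt_inr (j i : Fin k) {t : ℝ} (h1 : -1 ≤ t) (h2 : t ≤ 1) :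
    (pt j t).1 (.inr i) = if i = j then 1 - |t| else 0 := by
  simp only [pt_val j h1 h2, ptVec, Sum.elim_inr]

lemma continuous_coord (v : Fin 2 ⊕ Fin k) : Continuous fun x : Theta k => x.1 v :=
  (continuous_apply v).comp continuous_subtype_val

lemma continuous_height : Continuous (height (k := k)) := by
  exact (continuous_coord _).sub (continuous_coord _)

lemma isOpen_edgeSet (j : Fin k) : IsOpen (edgeSet j) :=
  isOpen_lt continuous_const (continuous_coord _)

lemma continuous_pt (j : Fin k) : Continuous (pt j) := by
  refine Continuous.subtype_mk (continuous_pi fun v => ?_) _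
  rcases v with v | v
  · fin_cases v <;> simp [ptVec] <;> fun_prop
  · by_cases hv : v = j <;> simp [ptVec, hv] <;> fun_prop

lemma height_bounds (x : Theta k) : -1 ≤ height x ∧ height x ≤ 1 := by
  obtain ⟨j, t, h1, h2, rfl⟩ := exists_pt x
  rw [height_pt j h1 h2]; exact ⟨h1, h2⟩

lemma pt_mem_edgeSet (i j : Fin k) {t : ℝ} (h1 : -1 < t) (h2 : t < 1) :
    pt j t ∈ edgeSet i ↔ i = j := by
  simp only [edgeSet, Set.mem_ofPred_eq, pt_inr j i h1.le h2.le]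
  have : |t| < 1 := abs_lt.2 ⟨h1, h2⟩
  by_cases h : i = j <;> simp [h]; exact this

lemma pt_neg_one (i j : Fin k) : pt i (-1) = pt j (-1) := by
  apply Subtype.ext
  rw [pt_val _ le_rfl (by norm_num), pt_val _ le_rfl (by norm_num)]
  funext v
  rcases v with v | v <;> simp [ptVec]

lemma pt_one (i j : Fin k) : pt i 1 = pt j 1 := by
  apply Subtype.ext
  rw [pt_val _ (by norm_num) le_rfl, pt_val _ (by norm_num) le_rfl]
  funext v
  rcases v with v | v <;> simp [ptVec]

lemma mem_edgeSet_spec {x : Theta k} {j : Fin k} (h : x ∈ edgeSet j) :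
    -1 < height x ∧ height x < 1 ∧ x = pt j (height x) := by
  obtain ⟨i, t, h1, h2, rfl⟩ := exists_pt x
  rw [height_pt i h1 h2]
  simp only [edgeSet, Set.mem_ofPred_eq, pt_inr i j h1 h2] at h
  by_cases hij : j = i
  · subst hij
    simp only [if_true] at h
    have := abs_lt.1 (show |t| < 1 by linarith)
    exact ⟨this.1, this.2, rfl⟩
  · simp [hij] at h

lemma edgeSet_unique {x : Theta k} {i j : Fin k} (hi : x ∈ edgeSet i) (hj : x ∈ edgeSet j) :
    i = j := by
  obtain ⟨h1, h2, h3⟩ := mem_edgeSet_spec hi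
  rw [h3, pt_mem_edgeSet _ _ h1 h2] at hj
  exact hj.symm

/-- The point is not a pole. -/
def Interior (x : Theta k) : Prop := -1 < height x ∧ height x < 1

lemma interior_of_mem {x : Theta k} {j : Fin k} (h : x ∈ edgeSet j) : Interior x :=
  ⟨(mem_edgeSet_spec h).1, (mem_edgeSet_spec h).2.1⟩

lemma interior_pt (j : Fin k) {t : ℝ} (h1 : -1 < t) (h2 : t < 1) : Interior (pt j t) := by
  rw [Interior, height_pt j h1.le h2.le]; exact ⟨h1, h2⟩

/-- `x` is strictly lower than `y`, or the two points lie on different open edges. This relation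
is open; it holds in both directions when the points lie on different open edges. -/
def Prec (x y : Theta k) : Prop :=
  height x < height y ∨ ∃ i j, i ≠ j ∧ x ∈ edgeSet i ∧ y ∈ edgeSet j

lemma isOpen_prec : IsOpen {p : Theta k × Theta k | Prec p.1 p.2} := by
  have : {p : Theta k × Theta k | Prec p.1 p.2} = {p | height p.1 < height p.2} ∪
      ⋃ (i) (j) (_ : i ≠ j), (Prod.fst ⁻¹' edgeSet i) ∩ (Prod.snd ⁻¹' edgeSet j) := by
    ext p
    simp only [Prec, Set.mem_union, Set.mem_iUnion, Set.mem_inter_iff, Set.mem_preimage,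
      exists_prop, Set.mem_ofPred_eq]
  rw [this]
  refine (isOpen_lt (continuous_height.comp continuous_fst)
    (continuous_height.comp continuous_snd)).union ?_
  refine isOpen_iUnion fun i => isOpen_iUnion fun j => isOpen_iUnion fun _ => ?_
  exact ((isOpen_edgeSet i).preimage continuous_fst).inter
    ((isOpen_edgeSet j).preimage continuous_snd)

variable [NeZero k]

/-- The edge on which a point lies, with the junk value `0` at the poles. -/
def edgeOf (x : Theta k) : Fin k := if h : ∃ j, x ∈ edgeSet j then h.choose else 0

lemma edgeOf_eq {x : Theta k} {j : Fin k} (h : x ∈ edgeSet j) : edgeOf x = j := by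
  have hex : ∃ j, x ∈ edgeSet j := ⟨j, h⟩
  rw [edgeOf, dif_pos hex]
  exact edgeSet_unique hex.choose_spec h

lemma Interior.mem {x : Theta k} (h : Interior x) : x ∈ edgeSet (edgeOf x) := by
  obtain ⟨i, t, h1, h2, rfl⟩ := exists_pt x
  rw [Interior, height_pt i h1 h2] at h
  have : pt i t ∈ edgeSet i := (pt_mem_edgeSet _ _ h.1 h.2).2 rfl
  rwa [edgeOf_eq this]

lemma pt_edgeOf (x : Theta k) : pt (edgeOf x) (height x) = x := by
  by_cases h : Interior x
  · exact (mem_edgeSet_spec h.mem).2.2.symm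
  · obtain ⟨i, t, h1, h2, rfl⟩ := exists_pt x
    rw [Interior, height_pt i h1 h2] at h
    rw [height_pt i h1 h2]
    rcases h1.eq_or_lt with rfl | h1
    · exact pt_neg_one _ _
    · rcases h2.eq_or_lt with rfl | h2
      · exact pt_one _ _
      · exact absurd ⟨h1, h2⟩ h

lemma edgeOf_pt (j : Fin k) {t : ℝ} (h1 : -1 < t) (h2 : t < 1) : edgeOf (pt j t) = j :=
  edgeOf_eq ((pt_mem_edgeSet _ _ h1 h2).2 rfl)

/-- A point is determined by its height and, away from the poles, its edge. -/
lemma ext_of_height {x y : Theta k} (h : height x = height y)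
    (he : Interior x → edgeOf x = edgeOf y) : x = y := by
  rw [← pt_edgeOf x, ← pt_edgeOf y, ← h]
  by_cases hx : Interior x
  · rw [he hx]
  · obtain ⟨h1, h2⟩ := height_bounds x
    rcases h1.eq_or_lt with h1 | h1
    · rw [← h1]; exact pt_neg_one _ _
    · rcases h2.eq_or_lt with h2 | h2
      · rw [h2]; exact pt_one _ _
      · exact absurd ⟨h1, h2⟩ hx

lemma edgeOf_eventually {x : Theta k} (h : Interior x) : ∀ᶠ y in 𝓝 x, edgeOf y = edgeOf x := by
  filter_upwards [(isOpen_edgeSet _).mem_nhds h.mem] with y hy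
  exact edgeOf_eq hy

/-- Moving a point along its edge to the height `τ` is continuous, even across the poles, where
`edgeOf` jumps, provided that `τ = ±1` there. -/
lemma continuous_slide {Z : Type} [TopologicalSpace Z] {x : Z → Theta k} {τ : Z → ℝ}
    (hx : Continuous x) (hτ : Continuous τ) (hb : ∀ z, -1 ≤ τ z ∧ τ z ≤ 1)
    (he : ∀ z, ¬ Interior (x z) → |τ z| = 1) :
    Continuous fun z => pt (edgeOf (x z)) (τ z) := by
  rw [continuous_iff_continuousAt]
  intro z
  by_cases h : Interior (x z)
  · refine ContinuousAt.congr (f := fun z' => pt (edgeOf (x z)) (τ z'))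
      ((continuous_pt _).comp hτ).continuousAt ?_
    filter_upwards [hx.continuousAt.eventually (edgeOf_eventually h)] with z' hz'
    rw [hz']
  · rw [Topology.IsInducing.subtypeVal.continuousAt_iff, continuousAt_pi]
    intro v
    rcases v with v | v
    · have h1 : ∀ z, (pt (edgeOf (x z)) (τ z)).1 (.inl v) = ![max (-τ z) 0, max (τ z) 0] v := by
        intro z
        rw [pt_val _ (hb z).1 (hb z).2]; rfl
      simp only [Function.comp_def, h1]
      fin_cases v <;> simp <;> fun_prop
    · have h1 : ∀ z, (pt (edgeOf (x z)) (τ z)).1 (.inr v) =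
          if v = edgeOf (x z) then 1 - |τ z| else 0 := by
        intro z
        rw [pt_inr _ _ (hb z).1 (hb z).2]
      have h2 : ∀ z, |τ z| ≤ 1 := fun z => abs_le.2 (hb z)
      simp only [Function.comp_def, h1, ContinuousAt]
      have h0 : (if v = edgeOf (x z) then 1 - |τ z| else 0) = 0 := by simp [he z h]
      rw [h0]
      have h3 : Filter.Tendsto (fun z => 1 - |τ z|) (𝓝 z) (𝓝 0) := by
        have : Continuous fun z => 1 - |τ z| := by fun_prop
        have h4 := this.tendsto z
        rwa [he z h, sub_self] at h4
      refine tendsto_of_tendsto_of_tendsto_of_le_of_le tendsto_const_nhds h3 ?_ ?_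
      · intro z'
        have := h2 z'
        dsimp only
        split_ifs <;> linarith
      · intro z'
        have := h2 z'
        dsimp only
        split_ifs <;> linarith

lemma prec_iff {x y : Theta k} : Prec x y ↔
    height x < height y ∨ (Interior x ∧ Interior y ∧ edgeOf x ≠ edgeOf y) := by
  refine or_congr_right ⟨?_, ?_⟩
  · rintro ⟨i, j, hij, hi, hj⟩
    refine ⟨interior_of_mem hi, interior_of_mem hj, ?_⟩
    rwa [edgeOf_eq hi, edgeOf_eq hj]
  · rintro ⟨h1, h2, h3⟩
    exact ⟨_, _, h3, h1.mem, h2.mem⟩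

lemma Prec.ne {x y : Theta k} (h : Prec x y) : x ≠ y := by
  rintro rfl
  rw [prec_iff] at h
  simp at h

lemma Prec.left_lt {x y : Theta k} (h : Prec x y) : height x < 1 := by
  rw [prec_iff] at h
  rcases h with h | h
  · exact h.trans_le (height_bounds y).2
  · exact h.1.2

lemma Prec.right_lt {x y : Theta k} (h : Prec x y) : -1 < height y := by
  rw [prec_iff] at h
  rcases h with h | h
  · exact (height_bounds x).1.trans_lt h
  · exact h.2.1.1

/-- Every pair of distinct points is in `Prec` position once it is sorted by height. -/
lemma prec_of_le {x y : Theta k} (hne : x ≠ y) (h : height x ≤ height y) : Prec x y := by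
  rw [prec_iff]
  rcases h.eq_or_lt with h | h
  · right
    have hi : Interior x := by
      by_contra hi
      exact hne (ext_of_height h fun h' => absurd h' hi)
    refine ⟨hi, ?_, fun he => hne (ext_of_height h fun _ => he)⟩
    rwa [Interior, ← h]
  · exact .inl h

/-- Points in `Prec` position both ways lie on different open edges, so that they can be exchanged
without leaving the configuration space. -/
lemma Prec.both {x y : Theta k} (h : Prec x y) (h' : Prec y x) :
    Interior x ∧ Interior y ∧ edgeOf x ≠ edgeOf y := by
  rw [prec_iff] at h h'
  rcases h with h | h
  · rcases h' with h' | h'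
    · exact absurd h h'.not_gt
    · exact ⟨h'.2.1, h'.1, h'.2.2.symm⟩
  · exact h

end Theta

/-! ### The space of ordered configurations and its map to the unordered configuration space -/

section Ordered

variable {k : ℕ}

/-- Triples of points in pairwise `Prec` position. An unordered configuration may have several such
orderings: they are the sheets over it of the map `toU`. -/
abbrev OConf (k : ℕ) : Type := {f : Fin 3 → Theta k // ∀ i j, i < j → Prec (f i) (f j)}

lemma permRel_equivalence : Equivalence (permRel 3 (Theta k)) where
  refl f := ⟨1, rfl⟩
  symm := by
    rintro f g ⟨σ, h⟩
    refine ⟨σ⁻¹, ?_⟩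
    rw [h]; funext i; simp
  trans := by
    rintro f g h ⟨σ, e⟩ ⟨τ, e'⟩
    exact ⟨τ * σ, by rw [e, e']; rfl⟩

lemma isOpen_oconf : IsOpen {f : Fin 3 → Theta k | ∀ i j, i < j → Prec (f i) (f j)} := by
  simp only [Set.ofPred_forall]
  refine isOpen_iInter_of_finite fun i => isOpen_iInter_of_finite fun j =>
    isOpen_iInter_of_finite fun _ => ?_
  exact isOpen_prec.preimage (f := fun f : Fin 3 → Theta k => (f i, f j))
    ((continuous_apply i).prodMk (continuous_apply j))

variable [NeZero k]

lemma OConf.injective (y : OConf k) : Function.Injective y.1 := by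
  intro i j h
  by_contra hij
  rcases lt_or_gt_of_ne hij with hl | hl
  · exact (y.2 _ _ hl).ne h
  · exact (y.2 _ _ hl).ne h.symm

/-- Forgetting the order. -/
def toU (y : OConf k) : UConf 3 (Theta k) := Quot.mk _ ⟨y.1, y.injective⟩

lemma toU_eq_iff {y y' : OConf k} : toU y = toU y' ↔ ∃ σ : Equiv.Perm (Fin 3), y'.1 = y.1 ∘ σ := by
  rw [eq_comm]
  exact permRel_equivalence.quot_mk_eq_iff _ _

lemma continuous_toU : Continuous (toU (k := k)) :=
  continuous_quot_mk.comp (Continuous.subtype_mk continuous_subtype_val _)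

lemma isOpenMap_toU : IsOpenMap (toU (k := k)) := by
  intro U hU
  have hU' : IsOpen (Subtype.val '' U) :=
    (IsOpen.isOpenMap_subtype_val isOpen_oconf) U hU
  rw [← isQuotientMap_quot_mk.isOpen_preimage]
  have : (Quot.mk (permRel 3 (Theta k))) ⁻¹' (toU '' U) =
      ⋃ σ : Equiv.Perm (Fin 3), (fun f : Conf 3 (Theta k) => f.1 ∘ σ) ⁻¹' (Subtype.val '' U) := by
    ext f
    simp only [Set.mem_preimage, Set.mem_image, Set.mem_iUnion]
    constructor
    · rintro ⟨y, hy, h⟩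
      obtain ⟨σ, hσ⟩ := (permRel_equivalence.quot_mk_eq_iff _ _).1 h
      exact ⟨σ, y, hy, hσ⟩
    · rintro ⟨σ, y, hy, h⟩
      refine ⟨y, hy, (permRel_equivalence.quot_mk_eq_iff _ _).2 ⟨σ, h⟩⟩
  rw [this]
  refine isOpen_iUnion fun σ => hU'.preimage ?_
  exact continuous_pi fun i => (continuous_apply (σ i)).comp continuous_subtype_val

/-- The permutation relating two orderings of the same configuration is locally constant. -/
lemma perm_eventually {y y' : OConf k} {σ : Equiv.Perm (Fin 3)} (h : y'.1 = y.1 ∘ σ) :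
    ∀ᶠ z in 𝓝 (y, y'), ∀ τ : Equiv.Perm (Fin 3), z.2.1 = z.1.1 ∘ τ → τ = σ := by
  have h1 : ∀ a b : Fin 3, ∀ᶠ z in 𝓝 (y, y'), z.2.1 a = z.1.1 b → y'.1 a = y.1 b := by
    intro a b
    by_cases hab : y'.1 a = y.1 b
    · exact Filter.Eventually.of_forall fun _ _ => hab
    · have : IsOpen {z : OConf k × OConf k | z.2.1 a ≠ z.1.1 b} :=
        isOpen_ne_fun ((continuous_apply a).comp (continuous_subtype_val.comp continuous_snd))
          ((continuous_apply b).comp (continuous_subtype_val.comp continuous_fst))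
      filter_upwards [this.mem_nhds hab] with z hz h
      exact absurd h hz
  have h2 := Filter.eventually_all.2 fun a => Filter.eventually_all.2 fun b => h1 a b
  filter_upwards [h2] with z hz τ hτ
  ext1 a
  have h3 := hz a (τ a) (by rw [hτ]; rfl)
  rw [h] at h3
  exact (y.injective h3).symm

lemma isLocalHomeomorph_toU : IsLocalHomeomorph (toU (k := k)) := by
  rw [isLocalHomeomorph_iff_isOpenEmbedding_restrict]
  intro y
  have h := perm_eventually (y := y) (y' := y) (σ := 1) rfl
  rw [nhds_prod_eq] at h
  obtain ⟨t, ht, htt⟩ := Filter.eventually_prod_self_iff'.1 h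
  refine ⟨interior t, interior_mem_nhds.2 ht, ?_⟩
  refine .of_continuous_injective_isOpenMap (continuous_toU.comp continuous_subtype_val) ?_
    (isOpenMap_toU.domRestrict isOpen_interior)
  rintro ⟨a, ha⟩ ⟨b, hb⟩ hab
  obtain ⟨σ, hσ⟩ := toU_eq_iff.1 hab
  have := htt a (interior_subset ha) b (interior_subset hb) σ hσ
  subst this
  exact Subtype.ext (Subtype.ext hσ.symm)

/-- Sorting the points by height puts them in `Prec` position. -/
lemma surjective_toU : Function.Surjective (toU (k := k)) := by
  rintro ⟨f⟩
  let σ := Tuple.sort (height ∘ f.1)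
  have hm : Monotone (height ∘ f.1 ∘ σ) := Tuple.monotone_sort (height ∘ f.1)
  refine ⟨⟨f.1 ∘ σ, fun i j hij => prec_of_le ?_ (hm hij.le)⟩, ?_⟩
  · exact fun h => hij.ne (σ.injective (f.2 h))
  · exact (permRel_equivalence.quot_mk_eq_iff _ _).2 ⟨σ, rfl⟩

lemma OConf.interior_one (y : OConf k) : Interior (y.1 1) :=
  ⟨(y.2 0 1 (by decide)).right_lt, (y.2 1 2 (by decide)).left_lt⟩

/-! ### Sliding configurations along their edges -/

/-- Slide the `i`-th point along its edge towards the height `b i`, linearly in time `s`. -/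
def flow (b : Fin 3 → ℝ) (y : Fin 3 → Theta k) (s : ℝ) : Fin 3 → Theta k :=
  fun i => pt (edgeOf (y i)) ((1 - s) * height (y i) + s * b i)

/-- The target heights `b` are admissible for `y`: poles stay fixed, and the heights at the end are
ordered, equal ones being allowed only strictly inside different edges. -/
structure Good (b : Fin 3 → ℝ) (y : Fin 3 → Theta k) : Prop where
  bound : ∀ i, -1 ≤ b i ∧ b i ≤ 1
  fixed : ∀ i, ¬ Interior (y i) → b i = height (y i)
  sep : ∀ i j, i < j → b i < b j ∨
    (b i = b j ∧ (-1 < b i ∧ b i < 1) ∧ edgeOf (y i) ≠ edgeOf (y j))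

lemma comb_bound {s u v : ℝ} (h0 : 0 ≤ s) (h1 : s ≤ 1) (hu : -1 ≤ u ∧ u ≤ 1)
    (hv : -1 ≤ v ∧ v ≤ 1) : -1 ≤ (1 - s) * u + s * v ∧ (1 - s) * u + s * v ≤ 1 := by
  constructor <;> nlinarith [hu.1, hu.2, hv.1, hv.2]

lemma comb_bound' {s u v : ℝ} (h0 : 0 ≤ s) (h1 : s < 1) (hu : -1 < u ∧ u < 1)
    (hv : -1 ≤ v ∧ v ≤ 1) : -1 < (1 - s) * u + s * v ∧ (1 - s) * u + s * v < 1 := by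
  constructor <;> nlinarith [hu.1, hu.2, hv.1, hv.2]

lemma flow_mem {b : Fin 3 → ℝ} {y : OConf k} (hg : Good b y.1) {s : ℝ} (h0 : 0 ≤ s)
    (h1 : s ≤ 1) (i j : Fin 3) (hij : i < j) : Prec (flow b y.1 s i) (flow b y.1 s j) := by
  have hbi := comb_bound h0 h1 (height_bounds (y.1 i)) (hg.bound i)
  have hbj := comb_bound h0 h1 (height_bounds (y.1 j)) (hg.bound j)
  rw [prec_iff]
  simp only [flow, height_pt _ hbi.1 hbi.2, height_pt _ hbj.1 hbj.2]
  rcases h1.eq_or_lt with rfl | h1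
  · rcases hg.sep i j hij with h | ⟨h, hb, he⟩
    · left; linarith
    · right
      have e : ∀ u v : ℝ, (1 - 1) * u + 1 * v = v := by intros; ring
      rw [e, e, ← h]
      refine ⟨interior_pt _ hb.1 hb.2, interior_pt _ hb.1 hb.2, ?_⟩
      rwa [edgeOf_pt _ hb.1 hb.2, edgeOf_pt _ hb.1 hb.2]
  · rcases prec_iff.1 (y.2 i j hij) with h | ⟨hi, hj, he⟩
    · left
      have : b i ≤ b j := by rcases hg.sep i j hij with h | h <;> [exact h.le; exact h.1.le]
      nlinarith
    · right
      have hi' := comb_bound' h0 h1 hi (hg.bound i)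
      have hj' := comb_bound' h0 h1 hj (hg.bound j)
      refine ⟨interior_pt _ hi'.1 hi'.2, interior_pt _ hj'.1 hj'.2, ?_⟩
      rwa [edgeOf_pt _ hi'.1 hi'.2, edgeOf_pt _ hj'.1 hj'.2]

lemma flow_zero (b : Fin 3 → ℝ) (y : Fin 3 → Theta k) : flow b y 0 = y := by
  funext i
  simp [flow, pt_edgeOf]

lemma flow_continuous (b : Fin 3 → ℝ) :
    Continuous fun p : unitInterval × {y : OConf k // Good b y.1} => flow b p.2.1.1 p.1 := by
  refine continuous_pi fun i => ?_
  have hx : Continuous fun p : unitInterval × {y : OConf k // Good b y.1} => p.2.1.1 i :=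
    (continuous_apply i).comp (continuous_subtype_val.comp
      (continuous_subtype_val.comp continuous_snd))
  refine continuous_slide hx ?_ ?_ ?_
  · have := continuous_height.comp hx
    simp only [Function.comp_def] at this
    fun_prop
  · intro p
    exact comb_bound p.1.2.1 p.1.2.2 (height_bounds _) (p.2.2.bound i)
  · intro p hp
    rw [p.2.2.fixed i hp]
    have e : ∀ s u : ℝ, (1 - s) * u + s * u = u := by intros; ring
    rw [e]
    obtain ⟨h1, h2⟩ := height_bounds (p.2.1.1 i)
    rcases h1.eq_or_lt with h1 | h1
    · rw [← h1]; norm_num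
    · rcases h2.eq_or_lt with h2 | h2
      · rw [h2]; norm_num
      · exact absurd ⟨h1, h2⟩ hp

/-- The configuration reached at time `1`. -/
def flowEnd {b : Fin 3 → ℝ} (y : OConf k) (hg : Good b y.1) : OConf k :=
  ⟨flow b y.1 1, flow_mem hg zero_le_one le_rfl⟩

/-- The path traced by `flow` from time `0` to time `1`. -/
def flowPath {b : Fin 3 → ℝ} (y : OConf k) (hg : Good b y.1) : Path y (flowEnd y hg) where
  toFun s := ⟨flow b y.1 s, flow_mem hg s.2.1 s.2.2⟩
  continuous_toFun := Continuous.subtype_mk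
    ((flow_continuous b).comp (Continuous.prodMk_left (⟨y, hg⟩ : {y : OConf k // Good b y.1}))) _
  source' := Subtype.ext (flow_zero b y.1)
  target' := rfl

/-- Lower point at the bottom pole, middle point at the middle of its edge, upper point at the top
pole. -/
def baseHeights : Fin 3 → ℝ := ![-1, 0, 1]

lemma good_base (y : OConf k) : Good baseHeights y.1 where
  bound i := by fin_cases i <;> simp [baseHeights]
  fixed i := by
    intro hi
    have hb := height_bounds (y.1 i)
    fin_cases i
    · have := (y.2 0 1 (by decide)).left_lt
      simp only [Interior, not_and, not_lt, baseHeights] at hi ⊢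
      by_contra h
      have h' := hi (lt_of_le_of_ne hb.1 h)
      exact absurd this h'.not_gt
    · exact absurd y.interior_one hi
    · have := (y.2 1 2 (by decide)).right_lt
      simp only [Interior, not_and, not_lt, baseHeights] at hi ⊢
      exact le_antisymm (hi this) hb.2
  sep i j hij := by
    left
    fin_cases i <;> fin_cases j <;> simp [baseHeights] at hij ⊢

/-- The configuration of heights `baseHeights` whose middle point is on the edge `m`. -/
def baseOConf (m : Fin k) : OConf k :=
  ⟨fun i => pt m (baseHeights i), fun i j hij => .inl <| by
    rw [height_pt, height_pt] <;> fin_cases i <;> fin_cases j <;> simp [baseHeights] at hij ⊢⟩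

/-- The edge of the middle point, which is never at a pole. -/
def mid (y : OConf k) : Fin k := edgeOf (y.1 1)

@[simp] lemma mid_base (m : Fin k) : mid (baseOConf m) = m :=
  edgeOf_pt m (by norm_num [baseHeights]) (by norm_num [baseHeights])

lemma flow_one_base (y : OConf k) : flow baseHeights y.1 1 = (baseOConf (mid y)).1 := by
  funext i
  simp only [flow, baseOConf, sub_self, zero_mul, one_mul, zero_add]
  fin_cases i
  · exact pt_neg_one _ _
  · rfl
  · exact pt_one _ _

/-- Every configuration slides to the base configuration with the same middle edge. -/
def toBase (y : OConf k) : Path y (baseOConf (mid y)) :=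
  (flowPath y (good_base y)).cast rfl (Subtype.ext (flow_one_base y).symm)

lemma isLocallyConstant_mid : IsLocallyConstant (mid (k := k)) := by
  rw [IsLocallyConstant.iff_eventually_eq]
  intro y
  have : ContinuousAt (fun z : OConf k => z.1 1) y :=
    ((continuous_apply 1).comp continuous_subtype_val).continuousAt
  exact this.eventually (edgeOf_eventually y.interior_one)

/-- The part of `OConf k` where the middle point is on the edge `m`; these are its connected
components, and each is contractible. -/
abbrev Chart (m : Fin k) : Type := {y : OConf k // mid y = m}

lemma mid_flow (y : OConf k) {s : ℝ} (h0 : 0 ≤ s) (h1 : s ≤ 1) :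
    edgeOf (flow baseHeights y.1 s 1) = mid y := by
  have hb : baseHeights 1 = 0 := rfl
  have h := y.interior_one
  simp only [flow, hb]
  rcases h1.eq_or_lt with rfl | h1
  · apply edgeOf_pt <;> norm_num
  · have := comb_bound' h0 h1 h (v := 0) (by norm_num)
    exact edgeOf_pt _ this.1 this.2

instance (m : Fin k) : ContractibleSpace (Chart m) := by
  rw [contractible_iff_id_nullhomotopic]
  refine ⟨⟨baseOConf m, mid_base m⟩, ⟨?_⟩⟩
  exact
    { toFun := fun p => ⟨⟨flow baseHeights p.2.1.1 p.1,
        flow_mem (good_base p.2.1) p.1.2.1 p.1.2.2⟩,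
        (mid_flow p.2.1 p.1.2.1 p.1.2.2).trans p.2.2⟩
      continuous_toFun := by
        refine Continuous.subtype_mk (Continuous.subtype_mk ?_ _) _
        have hc : Continuous fun p : unitInterval × Chart m =>
          ((p.1, ⟨p.2.1, good_base p.2.1⟩) : unitInterval × {y : OConf k // Good baseHeights y.1}) := by
          fun_prop
        exact (flow_continuous baseHeights).comp hc
      map_zero_left := fun y => Subtype.ext (Subtype.ext (flow_zero _ _))
      map_one_left := by
        rintro ⟨y, rfl⟩
        exact Subtype.ext (Subtype.ext (flow_one_base y)) }

lemma mid_path {y y' : OConf k} (η : Path y y') (t : unitInterval) : mid (η t) = mid y := by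
  have := (isLocallyConstant_mid.comp_continuous η.continuous).apply_eq_of_isPreconnected
    isPreconnected_univ (Set.mem_univ t) (Set.mem_univ 0)
  simpa using this

/-- Paths of `OConf k` are determined up to homotopy by their endpoints, as its components are
contractible. -/
lemma paths_homotopic_oconf {y y' : OConf k} (η η' : Path y y') : η.Homotopic η' := by
  have h' : mid y' = mid y := by simpa using mid_path η 1
  let lift : Path y y' → Path (⟨y, rfl⟩ : Chart (mid y)) ⟨y', h'⟩ := fun δ =>
    { toFun := fun t => ⟨δ t, mid_path δ t⟩
      continuous_toFun := Continuous.subtype_mk δ.continuous _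
      source' := Subtype.ext δ.source
      target' := Subtype.ext δ.target }
  have h := SimplyConnectedSpace.paths_homotopic (lift η) (lift η')
  exact h.map (⟨Subtype.val, continuous_subtype_val⟩ : C(Chart (mid y), OConf k))

end Ordered

/-! ### The combinatorial cocycle -/

section Cocycle

variable {k : ℕ} {G : Type} [Group G]

/-- The relations of the presentation of `B₃(K_{2,k})`. The element `p i j` stands for the exchange of
the two lower points across the edges `i` and `j`, and `q i j` for that of the two upper points. The
hexagon compares the two ways of reversing three points on distinct edges; `base` comes from the
choice of a spanning tree joining the components of `OConf k`. -/
structure BraidRel [NeZero k] (p q : Fin k → Fin k → G) : Prop where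
  p_self : ∀ i, p i i = 1
  q_self : ∀ i, q i i = 1
  p_inv : ∀ i j, p i j * p j i = 1
  q_inv : ∀ i j, q i j * q j i = 1
  hexagon : ∀ a b c, p b c * q a b * p c a = q a c * p b a * q c b
  base : ∀ j, p 0 j = 1

/-- The word in the generators attached to a permutation `g` of three points lying on the edges
`w 0, w 1, w 2`, read off from a reduced word of `g` in the adjacent transpositions. -/
def permCocycle (p q : Fin k → Fin k → G) (g : Equiv.Perm (Fin 3)) (w : Fin 3 → Fin k) : G :=
  if g 0 = 0 then (if g 1 = 1 then 1 else q (w 1) (w 2))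
  else if g 0 = 1 then
    (if g 1 = 0 then p (w 1) (w 0) else q (w 0) (w 2) * p (w 1) (w 0))
  else
    (if g 1 = 0 then p (w 2) (w 0) * q (w 1) (w 2)
      else p (w 2) (w 1) * q (w 0) (w 2) * p (w 1) (w 0))

/-- The transposition of the two lower points. -/
abbrev s₀ : Equiv.Perm (Fin 3) := Equiv.swap 0 1
/-- The transposition of the two upper points. -/
abbrev s₁ : Equiv.Perm (Fin 3) := Equiv.swap 1 2

lemma perm_cases (g : Equiv.Perm (Fin 3)) : g = 1 ∨ g = s₀ ∨ g = s₁ ∨ g = s₀ * s₁ ∨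
    g = s₁ * s₀ ∨ g = s₀ * s₁ * s₀ := by
  revert g; decide

variable (p q : Fin k → Fin k → G) (w : Fin 3 → Fin k)

lemma permCocycle_one : permCocycle p q 1 w = 1 := rfl
lemma permCocycle_s₀ : permCocycle p q s₀ w = p (w 1) (w 0) := rfl
lemma permCocycle_s₁ : permCocycle p q s₁ w = q (w 1) (w 2) := rfl
lemma permCocycle_s₀s₁ : permCocycle p q (s₀ * s₁) w = q (w 0) (w 2) * p (w 1) (w 0) := rfl
lemma permCocycle_s₁s₀ : permCocycle p q (s₁ * s₀) w = p (w 2) (w 0) * q (w 1) (w 2) := rfl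
lemma permCocycle_s₀s₁s₀ : permCocycle p q (s₀ * s₁ * s₀) w =
    p (w 2) (w 1) * q (w 0) (w 2) * p (w 1) (w 0) := rfl

variable {p q}

/-- The relations make `permCocycle` a cocycle on the action groupoid of the permutations on the
words of edges. -/
lemma permCocycle_mul [NeZero k] (h : BraidRel p q) (g τ : Equiv.Perm (Fin 3)) (w : Fin 3 → Fin k) :
    permCocycle p q (g * τ) w = permCocycle p q τ (w ∘ g) * permCocycle p q g w := by
  have hp1 : ∀ i j x, p i j * (p j i * x) = x := fun i j x => by
    rw [← mul_assoc, h.p_inv, one_mul]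
  have hq1 : ∀ i j x, q i j * (q j i * x) = x := fun i j x => by
    rw [← mul_assoc, h.q_inv, one_mul]
  have hx : ∀ a b c, p b c * (q a b * p c a) = q a c * (p b a * q c b) := fun a b c => by
    rw [← mul_assoc, ← mul_assoc, h.hexagon]
  have e0 : ∀ g : Equiv.Perm (Fin 3), ∀ w : Fin 3 → Fin k, permCocycle p q (g * s₀) w =
      p (w (g 1)) (w (g 0)) * permCocycle p q g w := by
    intro g w
    rcases perm_cases g with rfl | rfl | rfl | rfl | rfl | rfl
    · show p (w 1) (w 0) = p (w 1) (w 0) * 1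
      rw [mul_one]
    · show 1 = p (w 0) (w 1) * p (w 1) (w 0)
      rw [h.p_inv]
    · rfl
    · show p (w 2) (w 1) * q (w 0) (w 2) * p (w 1) (w 0) =
        p (w 2) (w 1) * (q (w 0) (w 2) * p (w 1) (w 0))
      rw [mul_assoc]
    · show q (w 1) (w 2) = p (w 0) (w 2) * (p (w 2) (w 0) * q (w 1) (w 2))
      rw [hp1]
    · show q (w 0) (w 2) * p (w 1) (w 0) =
        p (w 1) (w 2) * (p (w 2) (w 1) * q (w 0) (w 2) * p (w 1) (w 0))
      rw [mul_assoc, hp1]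
  have e1 : ∀ g : Equiv.Perm (Fin 3), ∀ w : Fin 3 → Fin k, permCocycle p q (g * s₁) w =
      q (w (g 1)) (w (g 2)) * permCocycle p q g w := by
    intro g w
    rcases perm_cases g with rfl | rfl | rfl | rfl | rfl | rfl
    · show q (w 1) (w 2) = q (w 1) (w 2) * 1
      rw [mul_one]
    · rfl
    · show 1 = q (w 2) (w 1) * q (w 1) (w 2)
      rw [h.q_inv]
    · show p (w 1) (w 0) = q (w 2) (w 0) * (q (w 0) (w 2) * p (w 1) (w 0))
      rw [hq1]
    · show p (w 2) (w 1) * q (w 0) (w 2) * p (w 1) (w 0) =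
        q (w 0) (w 1) * (p (w 2) (w 0) * q (w 1) (w 2))
      rw [← hx, mul_assoc]
    · show p (w 2) (w 0) * q (w 1) (w 2) =
        q (w 1) (w 0) * (p (w 2) (w 1) * q (w 0) (w 2) * p (w 1) (w 0))
      rw [mul_assoc, hx, hq1]
  rcases perm_cases τ with rfl | rfl | rfl | rfl | rfl | rfl
  · rw [mul_one, permCocycle_one, one_mul]
  · rw [e0]; rfl
  · rw [e1]; rfl
  · rw [← mul_assoc, e1, e0, permCocycle_s₀s₁, mul_assoc]; rfl
  · rw [← mul_assoc, e0, e1, permCocycle_s₁s₀, mul_assoc]; rfl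
  · rw [← mul_assoc, ← mul_assoc, e0, e1, e0, permCocycle_s₀s₁s₀]
    simp only [mul_assoc]; rfl

/-- `permCocycle` ignores the edges of the extreme points that `g` fixes. This matters because
`edgeOf` is junk, hence not locally constant, at the poles. -/
lemma permCocycle_congr (p q : Fin k → Fin k → G) (g : Equiv.Perm (Fin 3)) {w w' : Fin 3 → Fin k}
    (h0 : g 0 ≠ 0 → w 0 = w' 0) (h1 : w 1 = w' 1) (h2 : g 2 ≠ 2 → w 2 = w' 2) :
    permCocycle p q g w = permCocycle p q g w' := by
  rcases perm_cases g with rfl | rfl | rfl | rfl | rfl | rfl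
  · rfl
  · rw [permCocycle_s₀, permCocycle_s₀, h1, h0 (by decide)]
  · rw [permCocycle_s₁, permCocycle_s₁, h1, h2 (by decide)]
  all_goals
    replace h0 := h0 (by decide)
    replace h2 := h2 (by decide)
    simp only [permCocycle, h0, h1, h2]

variable [NeZero k]

lemma OConf.perm_unique {y : OConf k} {g τ : Equiv.Perm (Fin 3)} (h : y.1 ∘ g = y.1 ∘ τ) :
    g = τ := by
  ext1 i
  exact y.injective (congrFun h i)

/-- `permCocycle` applied to the permutation relating two orderings of the same configuration. -/
def sheetCocycle (p q : Fin k → Fin k → G) (y y' : OConf k) : G :=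
  if h : ∃ g : Equiv.Perm (Fin 3), y'.1 = y.1 ∘ g then
    permCocycle p q h.choose (fun i => edgeOf (y.1 i)) else 1

lemma sheetCocycle_eq (p q : Fin k → Fin k → G) {y y' : OConf k} {g : Equiv.Perm (Fin 3)}
    (h : y'.1 = y.1 ∘ g) :
    sheetCocycle p q y y' = permCocycle p q g (fun i => edgeOf (y.1 i)) := by
  have hex : ∃ g : Equiv.Perm (Fin 3), y'.1 = y.1 ∘ g := ⟨g, h⟩
  rw [sheetCocycle, dif_pos hex]
  rw [OConf.perm_unique (hex.choose_spec.symm.trans h)]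

/-- A point that is lowest in one ordering but not in another one is not a pole. -/
lemma OConf.interior_of_ne_zero {y y' : OConf k} {g : Equiv.Perm (Fin 3)} (h : y'.1 = y.1 ∘ g)
    (h0 : g 0 ≠ 0) : Interior (y.1 0) := by
  refine ⟨?_, (y.2 0 1 (by decide)).left_lt⟩
  have e : y.1 0 = y'.1 (g⁻¹ 0) := by rw [h]; simp
  rw [e]
  have hne : g⁻¹ 0 ≠ 0 := by
    intro h; apply h0; rw [Equiv.Perm.inv_eq_iff_eq] at h; exact h.symm
  exact (y'.2 0 (g⁻¹ 0) (Fin.pos_iff_ne_zero.2 hne)).right_lt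

/-- A point that is highest in one ordering but not in another one is not a pole. -/
lemma OConf.interior_of_ne_two {y y' : OConf k} {g : Equiv.Perm (Fin 3)} (h : y'.1 = y.1 ∘ g)
    (h2 : g 2 ≠ 2) : Interior (y.1 2) := by
  refine ⟨(y.2 1 2 (by decide)).right_lt, ?_⟩
  have e : y.1 2 = y'.1 (g⁻¹ 2) := by rw [h]; simp
  rw [e]
  have hne : g⁻¹ 2 ≠ 2 := by
    intro h; apply h2; rw [Equiv.Perm.inv_eq_iff_eq] at h; exact h.symm
  exact (y'.2 (g⁻¹ 2) 2 (lt_of_le_of_ne (Fin.le_last _) hne)).left_lt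

/-- The locally constant cocycle on the sheets of `toU` determined by a solution of `BraidRel`. -/
def braidCocycle {p q : Fin k → Fin k → G} (h : BraidRel p q) :
    LocConstCocycle (toU (k := k)) G where
  c := sheetCocycle p q
  comp y y' y'' h1 h2 := by
    obtain ⟨g, hg⟩ := toU_eq_iff.1 h1
    obtain ⟨τ, hτ⟩ := toU_eq_iff.1 h2
    rw [sheetCocycle_eq p q hg, sheetCocycle_eq p q hτ,
      sheetCocycle_eq p q (g := g * τ) (by rw [hτ, hg]; rfl), permCocycle_mul h, hg]
    rfl
  locConst y y' h1 := by
    obtain ⟨g, hg⟩ := toU_eq_iff.1 h1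
    have hco : ∀ i, Interior (y.1 i) → ∀ᶠ z in 𝓝 (y, y'), edgeOf (z.1.1 i) = edgeOf (y.1 i) := by
      intro i hi
      have : ContinuousAt (fun z : OConf k × OConf k => z.1.1 i) (y, y') :=
        ((continuous_apply i).comp (continuous_subtype_val.comp continuous_fst)).continuousAt
      exact this.eventually (edgeOf_eventually hi)
    have hco' : ∀ i, ∀ᶠ z in 𝓝 (y, y'), Interior (y.1 i) → edgeOf (z.1.1 i) = edgeOf (y.1 i) := by
      intro i
      by_cases hi : Interior (y.1 i)
      · filter_upwards [hco i hi] with z hz _ using hz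
      · exact Filter.Eventually.of_forall fun z h => absurd h hi
    filter_upwards [perm_eventually hg, hco' 0, hco' 1, hco' 2] with z hz e0 e1 e2 hzz
    obtain ⟨τ, hτ⟩ := toU_eq_iff.1 hzz
    obtain rfl := hz τ hτ
    rw [sheetCocycle_eq p q hτ, sheetCocycle_eq p q hg]
    exact permCocycle_congr p q _ (fun h => e0 (OConf.interior_of_ne_zero hg h))
      (e1 y.interior_one) (fun h => e2 (OConf.interior_of_ne_two hg h))

end Cocycle

/-! ### Sheet-change loops -/

section Abstract

variable {X Y : Type} [TopologicalSpace X] [TopologicalSpace Y]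

/-- The class of the constant path, seen as a path between two provably equal points. -/
def eqClass {x x' : X} (h : x = x') : Path.Homotopic.Quotient x x' :=
  (Path.Homotopic.Quotient.refl x).cast rfl h.symm

lemma eqClass_rfl (x : X) : eqClass (rfl : x = x) = Path.Homotopic.Quotient.refl x :=
  Path.Homotopic.Quotient.cast_rfl_rfl _

lemma eqClass_trans {x x' x'' : X} (h : x = x') (h' : x' = x'') :
    (eqClass h).trans (eqClass h') = eqClass (h.trans h') := by
  subst h h'; simp [eqClass_rfl]

lemma eqClass_trans_assoc {x x' x'' z : X} (h : x = x') (h' : x' = x'')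
    (γ : Path.Homotopic.Quotient x'' z) :
    (eqClass h).trans ((eqClass h').trans γ) = (eqClass (h.trans h')).trans γ := by
  subst h h'; simp [eqClass_rfl]

lemma eqClass_natural {x z x' z' : X} (p : Path x z) (p' : Path x' z') (hx : x = x')
    (hz : z = z') (h : ∀ t, p t = p' t) :
    (Path.Homotopic.Quotient.mk p).trans (eqClass hz) =
      (eqClass hx).trans (Path.Homotopic.Quotient.mk p') := by
  subst hx hz
  obtain rfl : p = p' := by ext t; exact h t
  simp [eqClass_rfl]

lemma symm_trans_cancel {x y z : X} (γ : Path.Homotopic.Quotient x y)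
    (δ : Path.Homotopic.Quotient y z) : γ.symm.trans (γ.trans δ) = δ := by
  rw [← Path.Homotopic.Quotient.trans_assoc, Path.Homotopic.Quotient.symm_trans,
    Path.Homotopic.Quotient.refl_trans]

lemma trans_symm_cancel {x y z : X} (γ : Path.Homotopic.Quotient x y)
    (δ : Path.Homotopic.Quotient x z) : γ.trans (γ.symm.trans δ) = δ := by
  rw [← Path.Homotopic.Quotient.trans_assoc, Path.Homotopic.Quotient.trans_symm,
    Path.Homotopic.Quotient.refl_trans]

lemma trans_symm_rev {x y z : X} (γ : Path.Homotopic.Quotient x y)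
    (δ : Path.Homotopic.Quotient y z) : (γ.trans δ).symm = δ.symm.trans γ.symm := by
  have h := Path.Homotopic.Quotient.trans_symm (γ.trans δ)
  have h2 : (δ.symm.trans γ.symm).trans ((γ.trans δ).trans (γ.trans δ).symm) =
      δ.symm.trans γ.symm := by rw [h, Path.Homotopic.Quotient.trans_refl]
  rw [Path.Homotopic.Quotient.trans_assoc, Path.Homotopic.Quotient.trans_assoc,
    symm_trans_cancel, symm_trans_cancel] at h2
  exact h2

/-- A choice, for every point `y` of `Y`, of a path class in `X` from a fixed base point to `ρ y`
which is compatible with the images of all paths of `Y`. -/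
structure PathSystem (ρ : Y → X) (hρ : Continuous ρ) (x₀ : X) where
  /-- the chosen class -/
  S : ∀ y, Path.Homotopic.Quotient x₀ (ρ y)
  natural : ∀ {y y' : Y} (η : Path y y'), (S y).trans (.mk (η.map hρ)) = S y'

namespace PathSystem

variable {ρ : Y → X} {hρ : Continuous ρ} {x₀ : X} (A : PathSystem ρ hρ x₀)

/-- The loop in `X` that reaches `ρ y = ρ y'` along the path chosen for `y` and returns along the
one chosen for `y'`. -/
def loop (y y' : Y) (h : ρ y = ρ y') : FundamentalGroup X x₀ :=
  (A.S y).trans ((eqClass h).trans (A.S y').symm)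

lemma loop_self (y : Y) : A.loop y y rfl = 1 := by
  rw [loop, eqClass_rfl, Path.Homotopic.Quotient.refl_trans, Path.Homotopic.Quotient.trans_symm]
  rfl

lemma loop_comp (y y' y'' : Y) (h : ρ y = ρ y') (h' : ρ y' = ρ y'') :
    A.loop y' y'' h' * A.loop y y' h = A.loop y y'' (h.trans h') := by
  show ((A.S y).trans ((eqClass h).trans (A.S y').symm)).trans
    ((A.S y').trans ((eqClass h').trans (A.S y'').symm)) = _
  rw [Path.Homotopic.Quotient.trans_assoc, Path.Homotopic.Quotient.trans_assoc, symm_trans_cancel,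
    eqClass_trans_assoc]
  rfl

/-- Sheet-change loops do not change when the two sheets are followed along the same path
of `X`. -/
lemma loop_eq_of_paths {y z y' z' : Y} (η : Path y z) (η' : Path y' z')
    (h : ∀ t, ρ (η t) = ρ (η' t)) (hy : ρ y = ρ y') (hz : ρ z = ρ z') :
    A.loop y y' hy = A.loop z z' hz := by
  have e := eqClass_natural (η.map hρ) (η'.map hρ) hy hz h
  rw [loop, loop, ← A.natural η, ← A.natural η', Path.Homotopic.Quotient.trans_assoc]
  rw [← Path.Homotopic.Quotient.trans_assoc _ (eqClass hz), e,
    Path.Homotopic.Quotient.trans_assoc]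
  rw [trans_symm_rev, trans_symm_cancel]

/-- Any subgroup containing all sheet-change loops is everything. -/
lemma mem_of_loop_mem (hloc : IsLocalHomeomorph ρ) (hsurj : Function.Surjective ρ) {y₀ : Y}
    (hx : ρ y₀ = x₀) (h0 : A.S y₀ = eqClass hx.symm) (H : Subgroup (FundamentalGroup X x₀))
    (hH : ∀ y y' h, A.loop y y' h ∈ H) (γ : FundamentalGroup X x₀) : γ ∈ H := by
  subst hx
  have key : ∀ y y' : Y, ∀ (δ : Path.Homotopic.Quotient (ρ y) (ρ y')),
      ((A.S y).trans (δ.trans (A.S y').symm) : FundamentalGroup X (ρ y₀)) ∈ H := by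
    have main : ∀ {x x' : X} (δ : Path.Homotopic.Quotient x x') (y y' : Y) (h : ρ y = x)
        (h' : x' = ρ y'),
        ((A.S y).trans ((eqClass h).trans (δ.trans ((eqClass h').trans (A.S y').symm)))
          : FundamentalGroup X (ρ y₀)) ∈ H := by
      intro x x' δ
      refine path_class_induction hloc hsurj
        (fun {x x'} δ => ∀ y y' : Y, ∀ (h : ρ y = x) (h' : x' = ρ y'),
          ((A.S y).trans ((eqClass h).trans (δ.trans ((eqClass h').trans (A.S y').symm)))
            : FundamentalGroup X (ρ y₀)) ∈ H) ?_ ?_ δ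
      · intro x x' x'' δ δ' h1 h2 y y'' h h''
        obtain ⟨y', rfl⟩ := hsurj x'
        have := H.mul_mem (h2 y' y'' rfl h'') (h1 y y' h rfl)
        change (Path.Homotopic.Quotient.trans (Path.Homotopic.Quotient.trans _ _)
          (Path.Homotopic.Quotient.trans _ _)) ∈ H at this
        simp only [Path.Homotopic.Quotient.trans_assoc, symm_trans_cancel, eqClass_rfl,
          Path.Homotopic.Quotient.refl_trans] at this ⊢
        exact this
      · intro z z' η y y' h h'
        have := H.mul_mem (hH z' y' h') (hH y z h)
        change (Path.Homotopic.Quotient.trans (Path.Homotopic.Quotient.trans _ _)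
          (Path.Homotopic.Quotient.trans _ _)) ∈ H at this
        rw [← A.natural η] at this
        simp only [Path.Homotopic.Quotient.trans_assoc, symm_trans_cancel] at this
        exact this
    intro y y' δ
    have := main δ y y' rfl rfl
    rwa [eqClass_rfl, eqClass_rfl, Path.Homotopic.Quotient.refl_trans,
        Path.Homotopic.Quotient.refl_trans] at this
  have := key y₀ y₀ γ
  rw [h0, eqClass_rfl, Path.Homotopic.Quotient.refl_trans] at this
  have e : (Path.Homotopic.Quotient.refl (ρ y₀)).symm = Path.Homotopic.Quotient.refl (ρ y₀) := by
    have := Path.Homotopic.Quotient.trans_symm (Path.Homotopic.Quotient.refl (ρ y₀))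
    rwa [Path.Homotopic.Quotient.refl_trans] at this
  rwa [e, Path.Homotopic.Quotient.trans_refl] at this

/-- Transport along a cocycle sends sheet-change loops to the values of the cocycle, as soon as
it does the expected thing on the chosen paths. -/
lemma exists_hom {G : Type} [Group G] (hloc : IsLocalHomeomorph ρ) (c : LocConstCocycle ρ G)
    (s : X → Y) (hs : ∀ x, ρ (s x) = x)
    (hS : ∀ T : (∀ {x x' : X}, Path.Homotopic.Quotient x x' → G),
      (∀ {x x' x'' : X} (γ : Path.Homotopic.Quotient x x') (δ : Path.Homotopic.Quotient x' x''),
        T (γ.trans δ) = T δ * T γ) →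
      (∀ {x x' : X} (h : x = x'), T (eqClass h) = 1) →
      (∀ {y y' : Y} (η : Path y y'),
        T (.mk (η.map hρ)) = c.c y' (s (ρ y')) * c.c (s (ρ y)) y) →
      ∀ y, T (A.S y) = c.c y (s (ρ y))) :
    ∃ φ : FundamentalGroup X x₀ →* G, ∀ y y' h, φ (A.loop y y' h) = c.c y y' := by
  obtain ⟨T, hT, hTm⟩ := exists_transport hloc c s hs
  have hrefl : ∀ x, T (Path.Homotopic.Quotient.refl x) = 1 := by
    intro x
    have := hT (Path.Homotopic.Quotient.refl x) (Path.Homotopic.Quotient.refl x)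
    rw [Path.Homotopic.Quotient.refl_trans] at this
    simpa using this
  have heq : ∀ {x x' : X} (h : x = x'), T (eqClass h) = 1 := by
    intro x x' h
    subst h
    rw [eqClass_rfl, hrefl]
  have hS' := hS T hT heq hTm
  refine ⟨{ toFun := fun γ => T γ
            map_one' := hrefl x₀
            map_mul' := fun γ δ => hT δ γ }, fun y y' h => ?_⟩
  have e1 : (A.loop y y' h : Path.Homotopic.Quotient x₀ x₀).trans (A.S y') =
      (A.S y).trans (eqClass h) := by
    rw [loop, Path.Homotopic.Quotient.trans_assoc, Path.Homotopic.Quotient.trans_assoc,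
      Path.Homotopic.Quotient.symm_trans, Path.Homotopic.Quotient.trans_refl]
  have e2 := congrArg T e1
  rw [hT, hT, heq, one_mul, hS', hS', ← h, ← c.comp y y' (s (ρ y)) h (by rw [hs, h])] at e2
  exact mul_left_cancel e2

end PathSystem

end Abstract

/-! ### A presentation of the braid group -/

section Presentation

variable {k : ℕ} [NeZero k]

lemma nonempty_path {y y' : OConf k} (h : mid y = mid y') : Nonempty (Path y y') :=
  ⟨(toBase y).trans ((toBase y').symm.cast (by rw [h]) rfl)⟩

/-- The image in the configuration space of the path class joining two configurations with the
same middle edge. -/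
def slideClass (y y' : OConf k) (h : mid y = mid y') :
    Path.Homotopic.Quotient (toU y) (toU y') :=
  .mk ((nonempty_path h).some.map continuous_toU)

lemma slideClass_eq {y y' : OConf k} (η : Path y y') (h : mid y = mid y') :
    .mk (η.map continuous_toU) = slideClass y y' h :=
  Path.Homotopic.Quotient.eq.2
    ((paths_homotopic_oconf η (nonempty_path h).some).map ⟨toU, continuous_toU⟩)

lemma slideClass_trans {y y' y'' : OConf k} (h : mid y = mid y') (h' : mid y' = mid y'') :
    (slideClass y y' h).trans (slideClass y' y'' h') = slideClass y y'' (h.trans h') := by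
  rw [← slideClass_eq ((nonempty_path h).some.trans (nonempty_path h').some)]
  rw [Path.map_trans]
  rfl

lemma slideClass_self (y : OConf k) : slideClass y y rfl = Path.Homotopic.Quotient.refl _ := by
  rw [← slideClass_eq (Path.refl y)]
  rfl

/-- A triple of points, in pairwise `Prec` position. -/
def tripleConf (x₀ x₁ x₂ : Theta k) (h01 : Prec x₀ x₁) (h02 : Prec x₀ x₂) (h12 : Prec x₁ x₂) :
    OConf k :=
  ⟨![x₀, x₁, x₂], fun i j hij => by
    fin_cases i <;> fin_cases j <;> first | exact absurd hij (by decide) | assumption⟩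

lemma prec_pt_zero {a b : Fin k} (h : a ≠ b) : Prec (pt a 0) (pt b 0) := by
  rw [prec_iff]
  refine .inr ⟨interior_pt a (by norm_num) (by norm_num), interior_pt b (by norm_num) (by norm_num), ?_⟩
  rwa [edgeOf_pt a (by norm_num) (by norm_num), edgeOf_pt b (by norm_num) (by norm_num)]

lemma prec_pt {a b : Fin k} {s t : ℝ} (hs : -1 ≤ s) (hst : s < t) (ht : t ≤ 1) :
    Prec (pt a s) (pt b t) := by
  rw [prec_iff, height_pt, height_pt]
  · exact .inl hst
  all_goals linarith

/-- Two points side by side on the edges `a` and `c`, the third one at the top. -/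
def pConf (a c : Fin k) (h : a ≠ c) : OConf k :=
  tripleConf (pt a 0) (pt c 0) (pt a 1) (prec_pt_zero h)
    (prec_pt (by norm_num) (by norm_num) le_rfl) (prec_pt (by norm_num) (by norm_num) le_rfl)

/-- Two points side by side on the edges `c` and `b`, the third one at the bottom. -/
def qConf (c b : Fin k) (h : c ≠ b) : OConf k :=
  tripleConf (pt c (-1)) (pt c 0) (pt b 0)
    (prec_pt le_rfl (by norm_num) (by norm_num)) (prec_pt le_rfl (by norm_num) (by norm_num))
    (prec_pt_zero h)

lemma pConf_swap (a c : Fin k) (h : a ≠ c) : (pConf c a h.symm).1 = (pConf a c h).1 ∘ s₀ := by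
  funext i
  fin_cases i
  · rfl
  · rfl
  · exact pt_one c a

lemma qConf_swap (c b : Fin k) (h : c ≠ b) : (qConf b c h.symm).1 = (qConf c b h).1 ∘ s₁ := by
  funext i
  fin_cases i
  · exact pt_neg_one b c
  · rfl
  · rfl

lemma toU_pConf (a c : Fin k) (h : a ≠ c) : toU (pConf a c h) = toU (pConf c a h.symm) :=
  toU_eq_iff.2 ⟨_, pConf_swap a c h⟩

lemma toU_qConf (a c : Fin k) (h : a ≠ c) : toU (qConf a c h) = toU (qConf c a h.symm) :=
  toU_eq_iff.2 ⟨_, qConf_swap a c h⟩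

lemma mid_pConf (a c : Fin k) (h : a ≠ c) : mid (pConf a c h) = c :=
  edgeOf_pt c (by norm_num) (by norm_num)

variable (k) in
/-- The base point of the configuration space. -/
abbrev basePt : UConf 3 (Theta k) := toU (baseOConf 0)

/-- A path class from the base point to the base configuration with middle edge `m`: slide
the two lower points until they sit side by side on the edges `m` and `0`, exchange their order, and
slide to the base configuration with middle edge `m`. -/
def treeClass (m : Fin k) : Path.Homotopic.Quotient (basePt k) (toU (baseOConf m)) :=
  if h : m = 0 then eqClass (by rw [h])
  else (slideClass (baseOConf 0) (pConf m 0 h) ((mid_base _).trans (mid_pConf _ _ _).symm)).trans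
    ((eqClass (toU_pConf m 0 h)).trans
      (slideClass (pConf 0 m (Ne.symm h)) (baseOConf m)
        ((mid_pConf _ _ _).trans (mid_base _).symm)))

lemma treeClass_zero : treeClass (0 : Fin k) = eqClass rfl := by
  rw [treeClass, dif_pos rfl]

variable (k) in
/-- The path system used to write down the generators. -/
def pathSystem : PathSystem (toU (k := k)) continuous_toU (basePt k) where
  S y := (treeClass (mid y)).trans (slideClass (baseOConf (mid y)) y (mid_base _))
  natural {y y'} η := by
    have h : mid y' = mid y := by simpa using mid_path η 1
    have hgen : ∀ m (hm : m = mid y), (treeClass (mid y)).trans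
        (slideClass (baseOConf (mid y)) y' ((mid_base _).trans h.symm)) =
        (treeClass m).trans (slideClass (baseOConf m) y' ((mid_base _).trans (hm.trans h.symm))) := by
      rintro m rfl; rfl
    rw [Path.Homotopic.Quotient.trans_assoc, slideClass_eq η h.symm, slideClass_trans,
      hgen _ h]

lemma pathSystem_base : (pathSystem k).S (baseOConf 0) = eqClass rfl := by
  have hgen : ∀ m (hm : mid (baseOConf (0 : Fin k)) = m),
      (pathSystem k).S (baseOConf 0) =
        (treeClass m).trans (slideClass (baseOConf m) (baseOConf 0) ((mid_base _).trans hm.symm)) := by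
    rintro m rfl; rfl
  rw [hgen 0 (mid_base _), treeClass_zero, slideClass_self, eqClass_rfl,
    Path.Homotopic.Quotient.refl_trans]

/-- The loop exchanging the two lower points. -/
def genP (i j : Fin k) : FundamentalGroup (UConf 3 (Theta k)) (basePt k) :=
  if h : i = j then 1 else
    (pathSystem k).loop (pConf j i (Ne.symm h)) (pConf i j h) (toU_pConf _ _ _)

/-- The loop exchanging the two upper points. -/
def genQ (i j : Fin k) : FundamentalGroup (UConf 3 (Theta k)) (basePt k) :=
  if h : i = j then 1 else
    (pathSystem k).loop (qConf i j h) (qConf j i (Ne.symm h)) (toU_qConf _ _ _)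

lemma interior_of_swap₀ {y y' : OConf k} (h : y'.1 = y.1 ∘ s₀) :
    Interior (y.1 0) ∧ Interior (y.1 1) ∧ edgeOf (y.1 0) ≠ edgeOf (y.1 1) := by
  have h1 := y.2 0 1 (by decide)
  have h2 := y'.2 0 1 (by decide)
  rw [h] at h2
  exact h1.both h2

lemma good_lower {y y' : OConf k} (h : y'.1 = y.1 ∘ s₀) : Good ![0, 0, 1] y.1 := by
  obtain ⟨h0, h1, hne⟩ := interior_of_swap₀ h
  refine ⟨fun i => by fin_cases i <;> norm_num, fun i hi => ?_, fun i j hij => ?_⟩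
  · fin_cases i
    · exact absurd h0 hi
    · exact absurd h1 hi
    · by_contra hne
      exact hi ⟨(y.2 1 2 (by decide)).right_lt, lt_of_le_of_ne (height_bounds _).2 (Ne.symm hne)⟩
  · fin_cases i <;> fin_cases j <;> first
      | exact absurd hij (by decide)
      | exact .inr ⟨rfl, ⟨by norm_num, by norm_num⟩, hne⟩
      | (left; norm_num)

lemma flowEnd_lower {y y' : OConf k} (h : y'.1 = y.1 ∘ s₀) :
    flowEnd y (good_lower h) =
      pConf (edgeOf (y.1 0)) (edgeOf (y.1 1)) (interior_of_swap₀ h).2.2 := by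
  apply Subtype.ext
  funext i
  simp only [flowEnd, flow]
  fin_cases i
  · simp [pConf, tripleConf]
  · simp [pConf, tripleConf]
  · simpa [pConf, tripleConf] using pt_one _ _

lemma interior_of_swap₁ {y y' : OConf k} (h : y'.1 = y.1 ∘ s₁) :
    Interior (y.1 1) ∧ Interior (y.1 2) ∧ edgeOf (y.1 1) ≠ edgeOf (y.1 2) := by
  have h1 := y.2 1 2 (by decide)
  have h2 := y'.2 1 2 (by decide)
  rw [h] at h2
  exact h1.both h2

lemma good_upper {y y' : OConf k} (h : y'.1 = y.1 ∘ s₁) : Good ![-1, 0, 0] y.1 := by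
  obtain ⟨h1, h2, hne⟩ := interior_of_swap₁ h
  refine ⟨fun i => by fin_cases i <;> norm_num, fun i hi => ?_, fun i j hij => ?_⟩
  · fin_cases i
    · by_contra hne
      exact hi ⟨lt_of_le_of_ne (height_bounds _).1 hne, (y.2 0 1 (by decide)).left_lt⟩
    · exact absurd h1 hi
    · exact absurd h2 hi
  · fin_cases i <;> fin_cases j <;> first
      | exact absurd hij (by decide)
      | exact .inr ⟨rfl, ⟨by norm_num, by norm_num⟩, hne⟩
      | (left; norm_num)

lemma flowEnd_upper {y y' : OConf k} (h : y'.1 = y.1 ∘ s₁) :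
    flowEnd y (good_upper h) =
      qConf (edgeOf (y.1 1)) (edgeOf (y.1 2)) (interior_of_swap₁ h).2.2 := by
  apply Subtype.ext
  funext i
  simp only [flowEnd, flow]
  fin_cases i
  · simpa [qConf, tripleConf] using pt_neg_one _ _
  · simp [qConf, tripleConf]
  · simp [qConf, tripleConf]

lemma swap_back {y y' : OConf k} {g : Equiv.Perm (Fin 3)} (hg : g * g = 1)
    (h : y'.1 = y.1 ∘ g) : y.1 = y'.1 ∘ g := by
  rw [h]
  funext i
  exact congrArg y.1 (Equiv.congr_fun hg i).symm

/-- A sheet-change loop is unchanged when both orderings are slid along the same flow. -/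
lemma loop_flow {y y' : OConf k} {g : Equiv.Perm (Fin 3)} (h : y'.1 = y.1 ∘ g) {b : Fin 3 → ℝ}
    (hb : b ∘ g = b) (hy : Good b y.1) (hy' : Good b y'.1) (e : toU y = toU y')
    (e' : toU (flowEnd y hy) = toU (flowEnd y' hy')) :
    (pathSystem k).loop y y' e = (pathSystem k).loop (flowEnd y hy) (flowEnd y' hy') e' := by
  refine (pathSystem k).loop_eq_of_paths (flowPath y hy) (flowPath y' hy') (fun t => ?_) _ _
  refine toU_eq_iff.2 ⟨g, ?_⟩
  show flow b y'.1 t = flow b y.1 t ∘ g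
  funext i
  have hbi : b (g i) = b i := congrFun hb i
  simp only [flow, Function.comp_apply, h, hbi]

/-- Exchanging the two lower points gives a generator: slide to a standard configuration. -/
lemma loop_swap₀ {y y' : OConf k} (h : y'.1 = y.1 ∘ s₀) (e : toU y = toU y') :
    (pathSystem k).loop y y' e = genP (edgeOf (y.1 1)) (edgeOf (y.1 0)) := by
  have h' : y.1 = y'.1 ∘ s₀ := swap_back (by decide) h
  have hne := (interior_of_swap₀ h).2.2
  rw [genP, dif_neg hne.symm]
  have e1 := flowEnd_lower h
  have e2 : flowEnd y' (good_lower h') = pConf (edgeOf (y.1 1)) (edgeOf (y.1 0)) hne.symm := by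
    rw [flowEnd_lower h']
    have a0 : y'.1 0 = y.1 1 := congrFun h 0
    have a1 : y'.1 1 = y.1 0 := congrFun h 1
    simp only [a0, a1]
  have key := loop_flow h (b := ![0, 0, 1]) (by funext i; fin_cases i <;> rfl)
    (good_lower h) (good_lower h') e (by rw [e1, e2]; exact toU_pConf _ _ _)
  rw [key]
  congr 1

/-- Exchanging the two upper points gives a generator: slide to a standard configuration. -/
lemma loop_swap₁ {y y' : OConf k} (h : y'.1 = y.1 ∘ s₁) (e : toU y = toU y') :
    (pathSystem k).loop y y' e = genQ (edgeOf (y.1 1)) (edgeOf (y.1 2)) := by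
  have h' : y.1 = y'.1 ∘ s₁ := swap_back (by decide) h
  have hne := (interior_of_swap₁ h).2.2
  rw [genQ, dif_neg hne]
  have e1 := flowEnd_upper h
  have e2 : flowEnd y' (good_upper h') = qConf (edgeOf (y.1 2)) (edgeOf (y.1 1)) hne.symm := by
    rw [flowEnd_upper h']
    have a0 : y'.1 2 = y.1 1 := congrFun h 2
    have a1 : y'.1 1 = y.1 2 := congrFun h 1
    simp only [a0, a1]
  have key := loop_flow h (b := ![-1, 0, 0]) (by funext i; fin_cases i <;> rfl)
    (good_upper h) (good_upper h') e (by rw [e1, e2]; exact toU_qConf _ _ _)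
  rw [key]
  congr 1

end Presentation

section Presentation

variable {k : ℕ} [NeZero k]

/-- Every sheet-change loop is the corresponding word in the generators: an inversion of the
permutation can be undone by an adjacent swap without leaving `OConf`. -/
lemma loop_eq_permCocycle {y y' : OConf k} {g : Equiv.Perm (Fin 3)} (h : y'.1 = y.1 ∘ g)
    (e : toU y = toU y') :
    (pathSystem k).loop y y' e = permCocycle genP genQ g (fun i => edgeOf (y.1 i)) := by
  have y01 := y.2 0 1 (by decide)
  have y02 := y.2 0 2 (by decide)
  have y12 := y.2 1 2 (by decide)
  have z01 := y'.2 0 1 (by decide)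
  have z02 := y'.2 0 2 (by decide)
  have z12 := y'.2 1 2 (by decide)
  rw [h] at z01 z02 z12
  rcases perm_cases g with rfl | rfl | rfl | rfl | rfl | rfl
  · obtain rfl : y' = y := Subtype.ext h
    exact PathSystem.loop_self _ _
  · exact loop_swap₀ h e
  · exact loop_swap₁ h e
  · have a1 : (tripleConf (y.1 1) (y.1 0) (y.1 2) z02 y12 y02).1 = y.1 ∘ s₀ := by
      funext i; fin_cases i <;> rfl
    have a2 : y'.1 = (tripleConf (y.1 1) (y.1 0) (y.1 2) z02 y12 y02).1 ∘ s₁ := by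
      rw [h]; funext i; fin_cases i <;> rfl
    rw [← (pathSystem k).loop_comp _ _ _ (toU_eq_iff.2 ⟨_, a1⟩) (toU_eq_iff.2 ⟨_, a2⟩),
      loop_swap₀ a1, loop_swap₁ a2]
    rfl
  · have a1 : (tripleConf (y.1 0) (y.1 2) (y.1 1) y02 y01 z02).1 = y.1 ∘ s₁ := by
      funext i; fin_cases i <;> rfl
    have a2 : y'.1 = (tripleConf (y.1 0) (y.1 2) (y.1 1) y02 y01 z02).1 ∘ s₀ := by
      rw [h]; funext i; fin_cases i <;> rfl
    rw [← (pathSystem k).loop_comp _ _ _ (toU_eq_iff.2 ⟨_, a1⟩) (toU_eq_iff.2 ⟨_, a2⟩),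
      loop_swap₁ a1, loop_swap₀ a2]
    rfl
  · have a1 : (tripleConf (y.1 1) (y.1 0) (y.1 2) z12 y12 y02).1 = y.1 ∘ s₀ := by
      funext i; fin_cases i <;> rfl
    have a2 : (tripleConf (y.1 1) (y.1 2) (y.1 0) y12 z12 z02).1 =
        (tripleConf (y.1 1) (y.1 0) (y.1 2) z12 y12 y02).1 ∘ s₁ := by
      funext i; fin_cases i <;> rfl
    have a3 : y'.1 = (tripleConf (y.1 1) (y.1 2) (y.1 0) y12 z12 z02).1 ∘ s₀ := by
      rw [h]; funext i; fin_cases i <;> rfl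
    have b1 := toU_eq_iff.2 ⟨_, a1⟩
    have b2 := toU_eq_iff.2 ⟨_, a2⟩
    have b3 := toU_eq_iff.2 ⟨_, a3⟩
    rw [← (pathSystem k).loop_comp _ _ _ (b1.trans b2) b3,
      ← (pathSystem k).loop_comp _ _ _ b1 b2,
      loop_swap₀ a1, loop_swap₁ a2, loop_swap₀ a3, ← mul_assoc]
    rfl

lemma loop_inv (y y' : OConf k) (h : toU y = toU y') :
    (pathSystem k).loop y' y h.symm * (pathSystem k).loop y y' h = 1 := by
  rw [PathSystem.loop_comp, PathSystem.loop_self]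

lemma genP_self (i : Fin k) : genP i i = 1 := dif_pos rfl

lemma genQ_self (i : Fin k) : genQ i i = 1 := dif_pos rfl

lemma genP_inv (i j : Fin k) : genP i j * genP j i = 1 := by
  by_cases h : i = j
  · subst h; rw [genP_self, one_mul]
  · rw [genP, genP, dif_neg h, dif_neg (Ne.symm h)]
    exact loop_inv _ _ _

lemma genQ_inv (i j : Fin k) : genQ i j * genQ j i = 1 := by
  by_cases h : i = j
  · subst h; rw [genQ_self, one_mul]
  · rw [genQ, genQ, dif_neg h, dif_neg (Ne.symm h)]
    exact loop_inv _ _ _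

lemma edgeOf_pt_zero (a : Fin k) : edgeOf (pt a 0) = a := edgeOf_pt a (by norm_num) (by norm_num)

/-- The two ways of reversing the order of three points lying on distinct edges. -/
lemma gen_hexagon (a b c : Fin k) :
    genP b c * genQ a b * genP c a = genQ a c * genP b a * genQ c b := by
  by_cases hab : a = b
  · subst hab; rw [genQ_self, genP_self, mul_one, mul_one, genP_inv, genQ_inv]
  by_cases hac : a = c
  · subst hac; rw [genQ_self, genP_self, one_mul, mul_one]
  by_cases hbc : b = c
  · subst hbc; rw [genQ_self, genP_self, one_mul, mul_one]
  let y := tripleConf (pt a 0) (pt c 0) (pt b 0) (prec_pt_zero hac) (prec_pt_zero hab)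
    (prec_pt_zero (Ne.symm hbc))
  let z₁ := tripleConf (pt a 0) (pt b 0) (pt c 0) (prec_pt_zero hab) (prec_pt_zero hac)
    (prec_pt_zero hbc)
  let z₂ := tripleConf (pt b 0) (pt a 0) (pt c 0) (prec_pt_zero (Ne.symm hab)) (prec_pt_zero hbc)
    (prec_pt_zero hac)
  let y' := tripleConf (pt b 0) (pt c 0) (pt a 0) (prec_pt_zero hbc)
    (prec_pt_zero (Ne.symm hab)) (prec_pt_zero (Ne.symm hac))
  have a1 : z₁.1 = y.1 ∘ s₁ := by funext i; fin_cases i <;> rfl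
  have a2 : z₂.1 = z₁.1 ∘ s₀ := by funext i; fin_cases i <;> rfl
  have a3 : y'.1 = z₂.1 ∘ s₁ := by funext i; fin_cases i <;> rfl
  have a4 : y'.1 = y.1 ∘ (s₀ * s₁ * s₀) := by funext i; fin_cases i <;> rfl
  have b1 := toU_eq_iff.2 ⟨_, a1⟩
  have b2 := toU_eq_iff.2 ⟨_, a2⟩
  have b3 := toU_eq_iff.2 ⟨_, a3⟩
  have key := loop_eq_permCocycle a4 (toU_eq_iff.2 ⟨_, a4⟩)
  rw [← (pathSystem k).loop_comp _ _ _ (b1.trans b2) b3,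
      ← (pathSystem k).loop_comp _ _ _ b1 b2,
      loop_swap₁ a1, loop_swap₀ a2, loop_swap₁ a3, ← mul_assoc, permCocycle_s₀s₁s₀] at key
  have ea := edgeOf_pt_zero a
  have eb := edgeOf_pt_zero b
  have ec := edgeOf_pt_zero c
  simp only [y, z₁, z₂, tripleConf, Matrix.cons_val_zero, Matrix.cons_val_one,
    Matrix.cons_val, ea, eb, ec] at key
  exact key.symm

/-- The generators along the spanning tree are trivial. -/
lemma genP_base (j : Fin k) : genP 0 j = 1 := by
  by_cases h : j = 0
  · subst h; exact genP_self _
  rw [genP, dif_neg (Ne.symm h)]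
  have hgen : ∀ (y : OConf k) m (hm : mid y = m), (pathSystem k).S y =
      (treeClass m).trans (slideClass (baseOConf m) y ((mid_base _).trans hm.symm)) := by
    rintro y m rfl; rfl
  have e : ((pathSystem k).S (pConf j 0 h)).trans (eqClass (toU_pConf j 0 h)) =
      (pathSystem k).S (pConf 0 j (Ne.symm h)) := by
    rw [hgen _ 0 (mid_pConf _ _ _), hgen _ j (mid_pConf _ _ _), treeClass_zero, eqClass_rfl,
      Path.Homotopic.Quotient.refl_trans, treeClass, dif_neg h]
    simp only [Path.Homotopic.Quotient.trans_assoc, slideClass_trans, slideClass_self,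
      Path.Homotopic.Quotient.trans_refl]
  rw [PathSystem.loop, ← Path.Homotopic.Quotient.trans_assoc, e,
    Path.Homotopic.Quotient.trans_symm]
  rfl

lemma gen_braidRel : BraidRel (genP (k := k)) genQ where
  p_self := genP_self
  q_self := genQ_self
  p_inv := genP_inv
  q_inv := genQ_inv
  hexagon := gen_hexagon
  base := genP_base

/-- The loops `genP i j` and `genQ i j` generate the fundamental group. -/
lemma gen_mem (H : Subgroup (FundamentalGroup (UConf 3 (Theta k)) (basePt k)))
    (hP : ∀ i j, genP i j ∈ H) (hQ : ∀ i j, genQ i j ∈ H) : H = ⊤ := by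
  rw [Subgroup.eq_top_iff']
  refine (pathSystem k).mem_of_loop_mem isLocalHomeomorph_toU surjective_toU
    (y₀ := baseOConf 0) rfl pathSystem_base H fun y y' h => ?_
  obtain ⟨g, hg⟩ := toU_eq_iff.1 h
  rw [loop_eq_permCocycle hg]
  unfold permCocycle
  split_ifs <;> simp only [H.one_mem, hP, hQ, H.mul_mem]

/-- Every solution of the relations is the image of the generators under a homomorphism, namely
transport along `braidCocycle`. -/
lemma exists_braid_hom {G : Type} [Group G] {p q : Fin k → Fin k → G} (h : BraidRel p q) :
    ∃ φ : FundamentalGroup (UConf 3 (Theta k)) (basePt k) →* G,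
      (∀ i j, φ (genP i j) = p i j) ∧ ∀ i j, φ (genQ i j) = q i j := by
  have hs : ∃ s : UConf 3 (Theta k) → OConf k, (∀ x, toU (s x) = x) ∧
      s (basePt k) = baseOConf 0 := by
    refine ⟨fun x => if x = basePt k then baseOConf 0 else
      Function.surjInv surjective_toU x, fun x => ?_, if_pos rfl⟩
    dsimp only
    split_ifs with hx
    · exact hx.symm
    · exact Function.surjInv_eq _ _
  obtain ⟨s, hs, hs0⟩ := hs
  have hpc : ∀ j (hj : j ≠ 0), (braidCocycle h).c (pConf j 0 hj) (pConf 0 j hj.symm) = 1 := by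
    intro j hj
    show sheetCocycle p q _ _ = 1
    rw [sheetCocycle_eq p q (pConf_swap j 0 hj), permCocycle_s₀]
    have : edgeOf ((pConf j 0 hj).1 1) = 0 := mid_pConf _ _ _
    simp only [this, h.base]
  obtain ⟨φ, hφ⟩ := (pathSystem k).exists_hom isLocalHomeomorph_toU (braidCocycle h) s hs (by
    intro T hT hTe hTm y
    have hslide : ∀ y y' hyy, T (slideClass y y' hyy) =
        (braidCocycle h).c y' (s (toU y')) * (braidCocycle h).c (s (toU y)) y :=
      fun y y' hyy => hTm _
    have htree : ∀ m, T (treeClass m) =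
        (braidCocycle h).c (baseOConf m) (s (toU (baseOConf m))) := by
      intro m
      by_cases hm : m = 0
      · subst hm
        rw [treeClass_zero, hTe, hs0, LocConstCocycle.self]
      · rw [treeClass, dif_neg hm, hT, hT, hTe, hslide, hslide, hs0, LocConstCocycle.self,
          mul_one, mul_one, mul_assoc, ← toU_pConf m 0 hm,
          (braidCocycle h).comp _ _ _ (hs _).symm ((hs _).trans (toU_pConf m 0 hm)), hpc, mul_one]
    show T ((treeClass (mid y)).trans _) = _
    rw [hT, hslide, htree, mul_assoc,
      (braidCocycle h).comp _ _ _ (hs _).symm (hs _), LocConstCocycle.self, mul_one])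
  refine ⟨φ, fun i j => ?_, fun i j => ?_⟩
  · by_cases hij : i = j
    · subst hij; rw [genP_self, map_one, h.p_self]
    · rw [genP, dif_neg hij, hφ]
      show sheetCocycle p q _ _ = _
      rw [sheetCocycle_eq p q (pConf_swap j i (Ne.symm hij)), permCocycle_s₀]
      exact congrArg₂ p (edgeOf_pt_zero i) (edgeOf_pt_zero j)
  · by_cases hij : i = j
    · subst hij; rw [genQ_self, map_one, h.q_self]
    · rw [genQ, dif_neg hij, hφ]
      show sheetCocycle p q _ _ = _
      rw [sheetCocycle_eq p q (qConf_swap i j hij), permCocycle_s₁]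
      exact congrArg₂ q (edgeOf_pt_zero i) (edgeOf_pt_zero j)

/-- The fundamental groups at all base points are isomorphic. -/
lemma nonempty_mulEquiv_base (x : UConf 3 (Theta k)) :
    Nonempty (FundamentalGroup (UConf 3 (Theta k)) x ≃*
      FundamentalGroup (UConf 3 (Theta k)) (basePt k)) := by
  obtain ⟨y, rfl⟩ := surjective_toU x
  obtain ⟨γ, -⟩ := Path.Homotopic.Quotient.mk_surjective ((pathSystem k).S y)
  exact ⟨FundamentalGroup.fundamentalGroupMulEquivOfPath γ.symm⟩

end Presentation

/-! ### Algebra of the presentation -/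

section Algebra

/-- A group presented, as in `BraidRel`, by generators `P i j`, `Q i j`. -/
structure IsPresented {k : ℕ} [NeZero k] (G : Type) [Group G] (P Q : Fin k → Fin k → G) : Prop where
  rel : BraidRel P Q
  gen : ∀ H : Subgroup G, (∀ i j, P i j ∈ H) → (∀ i j, Q i j ∈ H) → H = ⊤
  univ : ∀ {K : Type} [Group K] {p q : Fin k → Fin k → K}, BraidRel p q →
    ∃ φ : G →* K, (∀ i j, φ (P i j) = p i j) ∧ ∀ i j, φ (Q i j) = q i j

lemma isPresented_braid (k : ℕ) [NeZero k] :
    IsPresented (FundamentalGroup (UConf 3 (Theta k)) (basePt k)) genP genQ :=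
  ⟨gen_braidRel, gen_mem, exists_braid_hom⟩

lemma BraidRel.p_zero_right {k : ℕ} [NeZero k] {G : Type} [Group G] {p q : Fin k → Fin k → G}
    (h : BraidRel p q) (i : Fin k) : p i 0 = 1 := by
  have := h.p_inv 0 i
  rwa [h.base, one_mul] at this

lemma BraidRel.q_symm {k : ℕ} [NeZero k] {G : Type} [Group G] {p q : Fin k → Fin k → G}
    (h : BraidRel p q) (i j : Fin k) : q j i = (q i j)⁻¹ :=
  eq_inv_of_mul_eq_one_left (h.q_inv j i)

lemma BraidRel.p_symm {k : ℕ} [NeZero k] {G : Type} [Group G] {p q : Fin k → Fin k → G}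
    (h : BraidRel p q) (i j : Fin k) : p j i = (p i j)⁻¹ :=
  eq_inv_of_mul_eq_one_left (h.p_inv j i)

lemma BraidRel.map {k : ℕ} [NeZero k] {G K : Type} [Group G] [Group K] {p q : Fin k → Fin k → G}
    (h : BraidRel p q) (φ : G →* K) :
    BraidRel (fun i j => φ (p i j)) (fun i j => φ (q i j)) where
  p_self i := by rw [h.p_self, map_one]
  q_self i := by rw [h.q_self, map_one]
  p_inv i j := by rw [← map_mul, h.p_inv, map_one]
  q_inv i j := by rw [← map_mul, h.q_inv, map_one]
  hexagon a b c := by simp only [← map_mul, h.hexagon]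
  base j := by rw [h.base, map_one]

/-- With two edges all the `P i j` are trivial, and `Q 0 1` generates freely. -/
theorem nonempty_mulEquiv_int {G : Type} [Group G] {P Q : Fin 2 → Fin 2 → G}
    (h : IsPresented G P Q) : Nonempty (G ≃* Multiplicative ℤ) := by
  have hr : BraidRel (fun _ _ : Fin 2 => (1 : Multiplicative ℤ))
      (fun i j => Multiplicative.ofAdd ((j.val : ℤ) - i.val)) := by
    constructor
    all_goals intros
    all_goals first | rfl | (apply Multiplicative.toAdd.injective; simp)
  obtain ⟨φ, -, hφ⟩ := h.univ hr
  have hinj : Function.Injective (zpowersHom G (Q 0 1)) := by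
    apply Function.LeftInverse.injective (g := φ)
    intro n
    rw [zpowersHom_apply, map_zpow, hφ]
    apply Multiplicative.toAdd.injective
    simp
  have hsurj : Function.Surjective (zpowersHom G (Q 0 1)) := by
    rw [← MonoidHom.range_eq_top]
    have h01 : Q 0 1 ∈ (zpowersHom G (Q 0 1)).range := ⟨Multiplicative.ofAdd 1, by simp⟩
    refine h.gen _ (fun i j => ?_) (fun i j => ?_)
    · fin_cases i <;> fin_cases j <;>
        simp [h.rel.p_self, h.rel.base, h.rel.p_zero_right]
    · fin_cases i <;> fin_cases j
      · simp [h.rel.q_self]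
      · exact h01
      · show Q 1 0 ∈ _
        rw [h.rel.q_symm 0 1]
        exact Subgroup.inv_mem _ h01
      · simp [h.rel.q_self]
  exact ⟨(MulEquiv.ofBijective _ ⟨hinj, hsurj⟩).symm⟩

/-- Generators of the second kind for three edges, in terms of the free basis
`Q 0 1`, `Q 1 2`, `Q 2 0`. -/
def freeQ : Fin 3 → Fin 3 → FreeGroup (Fin 3) :=
  ![![1, .of 0, (.of 2)⁻¹], ![(.of 0)⁻¹, 1, .of 1], ![.of 2, (.of 1)⁻¹, 1]]

/-- Generators of the first kind for three edges; the hexagon relation forces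
`P 2 1 = Q 0 1 * Q 1 2 * Q 2 0`. -/
def freeP : Fin 3 → Fin 3 → FreeGroup (Fin 3) :=
  ![![1, 1, 1], ![1, 1, (.of 0 * .of 1 * .of 2)⁻¹], ![1, .of 0 * .of 1 * .of 2, 1]]

lemma freeP_freeQ_rel : BraidRel freeP freeQ where
  p_self i := by fin_cases i <;> rfl
  q_self i := by fin_cases i <;> rfl
  p_inv i j := by fin_cases i <;> fin_cases j <;> simp [freeP] <;> group
  q_inv i j := by fin_cases i <;> fin_cases j <;> simp [freeQ]
  hexagon a b c := by
    fin_cases a <;> fin_cases b <;> fin_cases c <;> simp [freeP, freeQ] <;> group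
  base j := by fin_cases j <;> rfl

/-- With three edges the hexagon relation only serves to eliminate `P 2 1`. -/
theorem nonempty_mulEquiv_freeGroup {G : Type} [Group G] {P Q : Fin 3 → Fin 3 → G}
    (h : IsPresented G P Q) : Nonempty (G ≃* FreeGroup (Fin 3)) := by
  obtain ⟨φ, -, hφ⟩ := h.univ freeP_freeQ_rel
  let ψ : FreeGroup (Fin 3) →* G := FreeGroup.lift ![Q 0 1, Q 1 2, Q 2 0]
  have hφψ : φ.comp ψ = MonoidHom.id _ := by
    apply FreeGroup.ext_hom
    intro i
    fin_cases i <;> simp [ψ, hφ, freeQ]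
  have hinj : Function.Injective ψ :=
    Function.LeftInverse.injective (g := φ) fun x => DFunLike.congr_fun hφψ x
  have hsurj : Function.Surjective ψ := by
    rw [← MonoidHom.range_eq_top]
    have h01 : Q 0 1 ∈ ψ.range := ⟨.of 0, by simp [ψ]⟩
    have h12 : Q 1 2 ∈ ψ.range := ⟨.of 1, by simp [ψ]⟩
    have h20 : Q 2 0 ∈ ψ.range := ⟨.of 2, by simp [ψ]⟩
    have hQ : ∀ i j, Q i j ∈ ψ.range := by
      intro i j
      fin_cases i <;> fin_cases j
      · simp [h.rel.q_self]
      · exact h01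
      · show Q 0 2 ∈ _
        rw [h.rel.q_symm 2 0]; exact Subgroup.inv_mem _ h20
      · show Q 1 0 ∈ _
        rw [h.rel.q_symm 0 1]; exact Subgroup.inv_mem _ h01
      · simp [h.rel.q_self]
      · exact h12
      · exact h20
      · show Q 2 1 ∈ _
        rw [h.rel.q_symm 1 2]; exact Subgroup.inv_mem _ h12
      · simp [h.rel.q_self]
    have h21 : P 2 1 ∈ ψ.range := by
      have e := h.rel.hexagon 0 2 1
      rw [h.rel.p_zero_right, h.rel.p_zero_right, mul_one, mul_one] at e
      rw [eq_mul_inv_of_mul_eq e]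
      exact Subgroup.mul_mem _ (Subgroup.mul_mem _ (hQ _ _) (hQ _ _))
        (Subgroup.inv_mem _ (hQ _ _))
    refine h.gen _ (fun i j => ?_) hQ
    fin_cases i <;> fin_cases j
    · simp [h.rel.base]
    · simp [h.rel.base]
    · simp [h.rel.base]
    · simp [h.rel.p_zero_right]
    · simp [h.rel.p_self]
    · show P 1 2 ∈ _
      rw [h.rel.p_symm 2 1]; exact Subgroup.inv_mem _ h21
    · simp [h.rel.p_zero_right]
    · exact h21
    · simp [h.rel.p_self]
  exact ⟨(MulEquiv.ofBijective _ ⟨hinj, hsurj⟩).symm⟩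

/-- The integral Heisenberg group, a central extension of `ℤ × ℤ` by `ℤ`: the upper unitriangular
integral `3 × 3` matrices with `x`, `y` above the diagonal and `z` in the corner. -/
@[ext]
structure Heis where
  /-- the upper of the two entries next to the diagonal -/
  x : ℤ
  /-- the lower of the two entries next to the diagonal -/
  y : ℤ
  /-- the corner entry -/
  z : ℤ

namespace Heis

instance : Mul Heis := ⟨fun a b => ⟨a.x + b.x, a.y + b.y, a.z + b.z + a.x * b.y⟩⟩
instance : One Heis := ⟨⟨0, 0, 0⟩⟩
instance : Inv Heis := ⟨fun a => ⟨-a.x, -a.y, -a.z + a.x * a.y⟩⟩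

@[simp] lemma mul_x (a b : Heis) : (a * b).x = a.x + b.x := rfl
@[simp] lemma mul_y (a b : Heis) : (a * b).y = a.y + b.y := rfl
@[simp] lemma mul_z (a b : Heis) : (a * b).z = a.z + b.z + a.x * b.y := rfl
@[simp] lemma one_x : (1 : Heis).x = 0 := rfl
@[simp] lemma one_y : (1 : Heis).y = 0 := rfl
@[simp] lemma one_z : (1 : Heis).z = 0 := rfl
@[simp] lemma inv_x (a : Heis) : a⁻¹.x = -a.x := rfl
@[simp] lemma inv_y (a : Heis) : a⁻¹.y = -a.y := rfl
@[simp] lemma inv_z (a : Heis) : a⁻¹.z = -a.z + a.x * a.y := rfl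

instance : Group Heis := Group.ofLeftAxioms
  (fun a b c => by ext <;> simp <;> ring) (fun a => by ext <;> simp) (fun a => by ext <;> simp)

/-- The projection to the abelianization. -/
def proj : Heis →* Multiplicative (ℤ × ℤ) where
  toFun a := Multiplicative.ofAdd (a.x, a.y)
  map_one' := rfl
  map_mul' _ _ := rfl

end Heis

/-- Free groups are projective, so that homomorphisms to `ℤ × ℤ` lift to the Heisenberg group. -/
lemma exists_heis_lift {G S : Type} [Group G] (e : G ≃* FreeGroup S)
    (f : G →* Multiplicative (ℤ × ℤ)) : ∃ F : G →* Heis, ∀ g, Heis.proj (F g) = f g := by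
  let L : FreeGroup S →* Heis := FreeGroup.lift fun s =>
    ⟨(f (e.symm (.of s))).toAdd.1, (f (e.symm (.of s))).toAdd.2, 0⟩
  have hL : Heis.proj.comp L = f.comp e.symm.toMonoidHom := by
    apply FreeGroup.ext_hom
    intro s
    simp only [MonoidHom.comp_apply, L, FreeGroup.lift_apply_of]
    rfl
  refine ⟨L.comp e.toMonoidHom, fun g => ?_⟩
  have := DFunLike.congr_fun hL (e g)
  simpa using this

/-- An antisymmetric function supported on the pair `{1, 2}`. -/
def cExp (i j : ℕ) : ℤ :=
  (if i = 1 ∧ j = 2 then 1 else 0) - (if i = 2 ∧ j = 1 then 1 else 0)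

/-- The coboundary `u j - u i` of the indicator function `u` of `3`. -/
def dExp (i j : ℕ) : ℤ := (if j = 3 then 1 else 0) - (if i = 3 then 1 else 0)

/-- Sending `P i j` to `(0, cExp i j)` and `Q i j` to `(dExp i j, -cExp i j)` gives a homomorphism to
`ℤ × ℤ`, that is, two degree-one classes. If the group were free it would lift to the Heisenberg
group, but the central coordinates of the four hexagons on the edges `0, 1, 2, 3` are inconsistent:
the cup product of the two classes does not vanish. -/
theorem not_isFreeGroupType {k : ℕ} [NeZero k] (hk : 4 ≤ k) {G : Type} [Group G]
    {P Q : Fin k → Fin k → G} (h : IsPresented G P Q) : ¬ IsFreeGroupType G := by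
  rintro ⟨S, ⟨e⟩⟩
  have hc : ∀ i j, cExp i j + cExp j i = 0 := by
    intro i j; simp only [cExp]; simp only [and_comm]; ring
  have hr : BraidRel
      (fun i j : Fin k => Multiplicative.ofAdd ((0 : ℤ), cExp i j))
      (fun i j : Fin k => Multiplicative.ofAdd (dExp i j, - cExp i j)) := by
    constructor
    · intro i
      have := hc i i
      apply Multiplicative.toAdd.injective
      ext <;> simp; omega
    · intro i
      have := hc i i
      apply Multiplicative.toAdd.injective
      ext <;> simp [dExp]; omega
    · intro i j
      have := hc i j
      apply Multiplicative.toAdd.injective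
      ext <;> simp; omega
    · intro i j
      have := hc i j
      apply Multiplicative.toAdd.injective
      ext <;> simp [dExp]; omega
    · intro a b c
      have h1 := hc b c
      have h2 := hc a b
      have h3 := hc a c
      apply Multiplicative.toAdd.injective
      ext <;> simp [dExp]; omega
    · intro j
      apply Multiplicative.toAdd.injective
      ext <;> simp [cExp]
  obtain ⟨f, hfp, hfq⟩ := h.univ hr
  obtain ⟨F, hF⟩ := exists_heis_lift e f
  have hrel := h.rel.map F
  have px : ∀ i j, (F (P i j)).x = 0 := fun i j =>
    congrArg (fun m => m.toAdd.1) ((hF _).trans (hfp i j))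
  have py : ∀ i j, (F (P i j)).y = cExp i j := fun i j =>
    congrArg (fun m => m.toAdd.2) ((hF _).trans (hfp i j))
  have qx : ∀ i j, (F (Q i j)).x = dExp i j := fun i j =>
    congrArg (fun m => m.toAdd.1) ((hF _).trans (hfq i j))
  have qy : ∀ i j, (F (Q i j)).y = - cExp i j := fun i j =>
    congrArg (fun m => m.toAdd.2) ((hF _).trans (hfq i j))
  have hex : ∀ a b c : Fin k, (F (P b c)).z + (F (Q a b)).z + (F (P c a)).z
      + dExp a b * cExp c a = (F (Q a c)).z + (F (P b a)).z + (F (Q c b)).z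
        + dExp a c * cExp b a - dExp a c * cExp c b := by
    intro a b c
    have := congrArg Heis.z (hrel.hexagon a b c)
    simp only [Heis.mul_z, Heis.mul_x, px, py, qx, qy] at this
    linarith
  have pinv : ∀ i j : Fin k, (F (P i j)).z + (F (P j i)).z = 0 := by
    intro i j
    have := congrArg Heis.z (hrel.p_inv i j)
    simp only [Heis.mul_z, px, py, Heis.one_z] at this
    linarith
  have qinv : ∀ i j : Fin k, (F (Q i j)).z + (F (Q j i)).z = dExp i j * cExp j i := by
    intro i j
    have := congrArg Heis.z (hrel.q_inv i j)
    simp only [Heis.mul_z, qx, qy, Heis.one_z] at this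
    linarith
  have base : ∀ j : Fin k, (F (P 0 j)).z = 0 := by
    intro j
    have := congrArg Heis.z (hrel.base j)
    simpa using this
  -- From here on, a linear system over `ℤ` in the central coordinates, solved by `omega`.
  let i1 : Fin k := ⟨1, by omega⟩
  let i2 : Fin k := ⟨2, by omega⟩
  let i3 : Fin k := ⟨3, by omega⟩
  have v0 : ((0 : Fin k) : ℕ) = 0 := rfl
  have v1 : (i1 : ℕ) = 1 := rfl
  have v2 : (i2 : ℕ) = 2 := rfl
  have v3 : (i3 : ℕ) = 3 := rfl
  have b1 := base i1
  have b2 := base i2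
  have b3 := base i3
  have p01 := pinv 0 i1
  have p02 := pinv 0 i2
  have p03 := pinv 0 i3
  have p12 := pinv i1 i2
  have p13 := pinv i1 i3
  have p23 := pinv i2 i3
  have q01 := qinv 0 i1
  have q02 := qinv 0 i2
  have q03 := qinv 0 i3
  have q12 := qinv i1 i2
  have q13 := qinv i1 i3
  have q23 := qinv i2 i3
  have h012 := hex 0 i1 i2
  have h013 := hex 0 i1 i3
  have h023 := hex 0 i2 i3
  have h123 := hex i1 i2 i3
  simp only [v0, v1, v2, v3, cExp, dExp] at q01 q02 q03 q12 q13 q23 h012 h013 h023 h123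
  norm_num at q01 q02 q03 q12 q13 q23 h012 h013 h023 h123
  omega

end Algebra

lemma isFreeGroupType_congr {G K : Type} [Group G] [Group K] (e : G ≃* K)
    (h : IsFreeGroupType K) : IsFreeGroupType G := by
  obtain ⟨S, ⟨f⟩⟩ := h
  exact ⟨S, ⟨e.trans f⟩⟩

/-- `B₃(K_{2,2}) ≅ ℤ`, `B₃(K_{2,3})` is free of rank 3, for `k ≥ 4` the
group `B₃(K_{2,k})` is not free, and consequently for `k ≥ 2`, `B₃(K_{2,k})` is free iff
`k ≤ 3`. -/
theorem braid3_completeBipartite_two :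
    (∀ x : UConf 3 ↥(realization (completeBipartiteGraph (Fin 2) (Fin 2))),
      Nonempty
        (FundamentalGroup (UConf 3 ↥(realization (completeBipartiteGraph (Fin 2) (Fin 2)))) x
          ≃* Multiplicative ℤ)) ∧
    (∀ x : UConf 3 ↥(realization (completeBipartiteGraph (Fin 2) (Fin 3))),
      Nonempty
        (FundamentalGroup (UConf 3 ↥(realization (completeBipartiteGraph (Fin 2) (Fin 3)))) x
          ≃* FreeGroup (Fin 3))) ∧
    (∀ k : ℕ, 4 ≤ k →
      ∀ x : UConf 3 ↥(realization (completeBipartiteGraph (Fin 2) (Fin k))),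
        ¬ IsFreeGroupType
          (FundamentalGroup (UConf 3 ↥(realization (completeBipartiteGraph (Fin 2) (Fin k)))) x)) ∧
    (∀ k : ℕ, 2 ≤ k →
      ((∀ x : UConf 3 ↥(realization (completeBipartiteGraph (Fin 2) (Fin k))),
          IsFreeGroupType
            (FundamentalGroup (UConf 3 ↥(realization (completeBipartiteGraph (Fin 2) (Fin k)))) x))
        ↔ k ≤ 3)) := by
  have h2 : ∀ x : UConf 3 (Theta 2),
      Nonempty (FundamentalGroup (UConf 3 (Theta 2)) x ≃* Multiplicative ℤ) := fun x => by
    obtain ⟨e⟩ := nonempty_mulEquiv_base x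
    obtain ⟨f⟩ := nonempty_mulEquiv_int (isPresented_braid 2)
    exact ⟨e.trans f⟩
  have h3 : ∀ x : UConf 3 (Theta 3),
      Nonempty (FundamentalGroup (UConf 3 (Theta 3)) x ≃* FreeGroup (Fin 3)) := fun x => by
    obtain ⟨e⟩ := nonempty_mulEquiv_base x
    obtain ⟨f⟩ := nonempty_mulEquiv_freeGroup (isPresented_braid 3)
    exact ⟨e.trans f⟩
  have h4 : ∀ k : ℕ, 4 ≤ k → ∀ x : UConf 3 (Theta k),
      ¬ IsFreeGroupType (FundamentalGroup (UConf 3 (Theta k)) x) := by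
    intro k hk x hx
    have : NeZero k := ⟨by omega⟩
    obtain ⟨e⟩ := nonempty_mulEquiv_base x
    exact not_isFreeGroupType hk (isPresented_braid k) (isFreeGroupType_congr e.symm hx)
  refine ⟨h2, h3, h4, fun k hk => ⟨fun hfree => ?_, fun hk3 x => ?_⟩⟩
  · by_contra! hk4
    have : NeZero k := ⟨by omega⟩
    exact h4 k hk4 (basePt k) (hfree _)
  · obtain rfl | rfl : k = 2 ∨ k = 3 := by omega
    · obtain ⟨e⟩ := h2 x
      exact ⟨Unit, ⟨e.trans FreeGroup.mulEquivIntOfUnique.symm⟩⟩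
    · exact ⟨Fin 3, h3 x⟩

end GraphBraid
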